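/- (Kato inequality.) Let ρ_o, σ_o ∈ L∞(ℝ;[0,1]), y ∈ W^{1,∞}_loc((0,∞);ℝ), and q, r ∈ L∞_loc((0,∞);ℝ) be such that (ẏ(t), q(t)) and (ẏ(t), r(t)) are admissible slope–constraint pairs for a.e. t > 0. Let ρ be a G_{ẏ}(q)-entropy solution with initial datum ρ_o and σ a G_{ẏ}(r)-entropy solution with initial datum σ_o, with one-sided traces (ρ⁻,ρ⁺) and (σ⁻,σ⁺) along Γ = {(y(t),t)}. Then for every nonnegative φ ∈ C_c^∞(ℝ×[0,∞)): ∫₀^∞∫_ℝ(|ρ−σ|∂_tφ + Φ(ρ,σ)∂_xφ)dx dt + ∫_ℝ|ρ_o−σ_o|φ(x,0)dx + ∫₀^∞ (Φ_{ẏ(t)}(ρ⁺(t),σ⁺(t)) − Φ_{ẏ(t)}(ρ⁻(t),σ⁻(t)))φ(y(t),t)dt ≥ 0. -/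

import Mathlib

/-!
The inequality is obtained in two steps, first off the interface `Γ` and then across it.

*Off the interface.* Each solution is extended to `t ≤ 0` by its initial datum, and the flux is
multiplied by the Heaviside function of `t`. Integrating in time over the lower half plane turns the
initial term into an ordinary interior term (`split_integral`, `glued_integral`), so that both
solutions satisfy the Kruzhkov inequalities on the whole plane for test functions supported away
from `Γ`. Doubling the variables (`doubled_ineq`, `doubling`) gives the Kato inequality for such test
functions. The only deviation from Kruzhkov's argument is a commutator due to the jump of the flux
at `t = 0`; it lives on the strip `|t| ≤ τ`, where `τ` is the width of the kernel in time, and it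
vanishes with `τ` because the space width of the kernel is kept fixed meanwhile (`exists_kernel`).

*Across the interface.* Admissibility of `(ẏ, q)` forces `|ẏ| ≤ L`, with `L` the Lipschitz constant of
the flux (`AdmissiblePair.abs_slope_le`), so `y` extends to a Lipschitz curve `Y` on `ℝ`. An arbitrary
test function `φ` is replaced by `φ · (1 - bump((x - Y(t))/ε))`, the curve being first smoothed to make
this a test function (`kato_cut`). As `ε → 0` the gradient of the cut-off leaves the jump across `Γ` of
`Φ(ρ,σ) - ẏ|ρ-σ| = Φ_ẏ(ρ,σ)`, because bump' has integral `1` on the negative and `-1` on the positive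
half line (`layer_eq`, `layer_limit`, `kato_interface`). The strong traces of `ρ` and `σ` identify the two
one-sided limits (`trace_combine`, `sliceInt_tendsto`), which yields the last term of the inequality.
-/

open MeasureTheory Set Filter Topology

noncomputable section

/-- The normal flux `F_s(ρ) = f(ρ) - s·ρ` through the line of slope `s`. -/
def Flx (f : ℝ → ℝ) (s ρ : ℝ) : ℝ := f ρ - s * ρ

/-- The Kruzhkov entropy flux `Φ_s(a,b) = sgn(a-b)(F_s(a) - F_s(b))`. -/
def EFlx (f : ℝ → ℝ) (s a b : ℝ) : ℝ := Real.sign (a - b) * (Flx f s a - Flx f s b)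

/-- `f` is a bell-shaped flux with critical density `ρb`:
`f` is `C²` on `[0,1]`, vanishes at `0` and `1`, is concave on `[0,1]`, and its
derivative has the sign of `ρb - ρ` a.e. on `(0,1)`. -/
structure BellShaped (f : ℝ → ℝ) (ρb : ℝ) : Prop where
  smooth : ContDiffOn ℝ 2 f (Icc 0 1)
  zero_at_zero : f 0 = 0
  zero_at_one : f 1 = 0
  concave : ConcaveOn ℝ (Icc 0 1) f
  crit_mem : ρb ∈ Ioo (0:ℝ) 1
  deriv_sign : ∀ᵐ ρ ∂(volume.restrict (Ioo (0:ℝ) 1)),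
    0 < derivWithin f (Icc 0 1) ρ * (ρb - ρ)

/-- `max_{[0,1]} F_s`. -/
def maxFlx (f : ℝ → ℝ) (s : ℝ) : ℝ := sSup (Flx f s '' Icc 0 1)

/-- Admissible slope–constraint pair `(s,q)`. -/
def AdmissiblePair (f : ℝ → ℝ) (s q : ℝ) : Prop :=
  (0 ≤ s ∧ 0 ≤ q ∧ q < maxFlx f s) ∨ (s < 0 ∧ -s ≤ q ∧ q < maxFlx f s)

/-- The admissibility germ `G_s(q) = G¹ ∪ G² ∪ G³`. -/
def Germ (f : ℝ → ℝ) (s q : ℝ) : Set (ℝ × ℝ) :=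
  {p | p.1 ∈ Icc (0:ℝ) 1 ∧ p.2 ∈ Icc (0:ℝ) 1 ∧
    ((p.2 < p.1 ∧ Flx f s p.1 = q ∧ Flx f s p.2 = q) ∨
     (p.1 = p.2 ∧ Flx f s p.1 ≤ q) ∨
     (p.1 < p.2 ∧ Flx f s p.1 = Flx f s p.2 ∧ Flx f s p.1 ≤ q))}

/-- The constraint remainder `ℛ_s(κ,q) = 2(F_s(κ) - min{F_s(κ), q})`. -/
def Rem (f : ℝ → ℝ) (s κ q : ℝ) : ℝ := 2 * (Flx f s κ - min (Flx f s κ) q)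

/-- `∂_t φ`. -/
def pT (φ : ℝ × ℝ → ℝ) (p : ℝ × ℝ) : ℝ := fderiv ℝ φ p (0, 1)

/-- `∂_x φ`. -/
def pX (φ : ℝ × ℝ → ℝ) (p : ℝ × ℝ) : ℝ := fderiv ℝ φ p (1, 0)

/-- A nonnegative smooth compactly supported test function on `ℝ × ℝ`
(first variable `x`, second variable `t`). -/
def TestFun (φ : ℝ × ℝ → ℝ) : Prop :=
  ContDiff ℝ (⊤ : ℕ∞) φ ∧ HasCompactSupport φ ∧ ∀ p, 0 ≤ φ p

/-- `y ∈ W^{1,∞}_loc((0,∞))`: locally Lipschitz on `(0,∞)`. -/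
def LocLip (y : ℝ → ℝ) : Prop :=
  ∀ K : Set ℝ, IsCompact K → K ⊆ Ioi 0 → ∃ C : NNReal, LipschitzOnWith C y K

/-- `q ∈ L∞_loc((0,∞))`: locally essentially bounded on `(0,∞)`. -/
def LocBdd (q : ℝ → ℝ) : Prop :=
  ∀ K : Set ℝ, IsCompact K → K ⊆ Ioi 0 → ∃ M : ℝ,
    ∀ᵐ t ∂(volume.restrict K), |q t| ≤ M

/-- The interface `Γ = {(y(t), t) : t > 0}`. -/
def Gam (y : ℝ → ℝ) : Set (ℝ × ℝ) := {p | ∃ t, 0 < t ∧ p = (y t, t)}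

/-- Interior term of the Kruzhkov entropy inequality. -/
def interiorTerm (f : ℝ → ℝ) (ρ : ℝ → ℝ → ℝ) (κ : ℝ) (φ : ℝ × ℝ → ℝ) : ℝ :=
  ∫ t in Ioi (0:ℝ), ∫ x : ℝ,
    (|ρ x t - κ| * pT φ (x, t) + EFlx f 0 (ρ x t) κ * pX φ (x, t))

/-- Initial-datum term of the entropy inequality. -/
def initTerm (ρo : ℝ → ℝ) (κ : ℝ) (φ : ℝ × ℝ → ℝ) : ℝ :=
  ∫ x : ℝ, |ρo x - κ| * φ (x, 0)

/-- Remainder term of the entropy inequality, along the interface. -/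
def remTerm (f : ℝ → ℝ) (y q : ℝ → ℝ) (κ : ℝ) (φ : ℝ × ℝ → ℝ) : ℝ :=
  ∫ t in Ioi (0:ℝ), Rem f (deriv y t) κ (q t) * φ (y t, t)

/-- Admissible entropy solution of the constrained Cauchy problem (Definition 2.1):
entropy inequalities with remainder, and weak form of the flux constraint. -/
def IsAdmSol (f : ℝ → ℝ) (ρo y q : ℝ → ℝ) (ρ : ℝ → ℝ → ℝ) : Prop :=
  (∀ κ ∈ Icc (0:ℝ) 1, ∀ φ : ℝ × ℝ → ℝ, TestFun φ →
     0 ≤ interiorTerm f ρ κ φ + initTerm ρo κ φ + remTerm f y q κ φ) ∧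
  (∀ φ : ℝ × ℝ → ℝ, TestFun φ → tsupport φ ⊆ univ ×ˢ Ioi (0:ℝ) →
     -(∫ t in Ioi (0:ℝ), ∫ x in Ioi (y t),
         (ρ x t * pT φ (x, t) + f (ρ x t) * pX φ (x, t)))
       ≤ ∫ t in Ioi (0:ℝ), q t * φ (y t, t))

/-- `ρ` admits strong one-sided traces `ρm` (left) and `ρp` (right) along `Γ`. -/
def HasTraces (y : ℝ → ℝ) (ρ : ℝ → ℝ → ℝ) (ρm ρp : ℝ → ℝ) : Prop :=
  ∀ T : ℝ, 0 < T →
    Tendsto (fun ε : ℝ => ∫ t in Ioo (0:ℝ) T, |ρ (y t - ε) t - ρm t|)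
      (𝓝[>] 0) (𝓝 0) ∧
    Tendsto (fun ε : ℝ => ∫ t in Ioo (0:ℝ) T, |ρ (y t + ε) t - ρp t|)
      (𝓝[>] 0) (𝓝 0)

/-- `G_{ẏ}(q)`-entropy solution (Definition 2.4): entropy inequalities for test
functions supported away from `Γ`, plus the germ condition on the traces. -/
def IsGermSol (f : ℝ → ℝ) (ρo y q : ℝ → ℝ) (ρ : ℝ → ℝ → ℝ) (ρm ρp : ℝ → ℝ) : Prop :=
  (∀ κ ∈ Icc (0:ℝ) 1, ∀ φ : ℝ × ℝ → ℝ, TestFun φ → Disjoint (tsupport φ) (Gam y) →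
     0 ≤ interiorTerm f ρ κ φ + initTerm ρo κ φ) ∧
  HasTraces y ρ ρm ρp ∧
  (∀ᵐ t ∂(volume.restrict (Ioi (0:ℝ))), (ρm t, ρp t) ∈ Germ f (deriv y t) (q t))

/-! ### The Kruzhkov entropy flux -/

/-- What the doubling argument uses of the Kruzhkov entropy flux `Q(a,b) = sgn(a-b)(f(a)-f(b))` of
an `L`-Lipschitz `f`: symmetry, vanishing on the diagonal, and the Lipschitz bound, which holds in
spite of the jump of the sign because `f(a)-f(b)` vanishes where the sign jumps. -/
structure EntropyFlux (Q : ℝ → ℝ → ℝ) (L : ℝ) : Prop where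
  nonneg : 0 ≤ L
  lip : ∀ a b a' b', |Q a b - Q a' b'| ≤ L * (|a - a'| + |b - b'|)
  symm : ∀ a b, Q a b = Q b a
  diag : ∀ a, Q a a = 0

namespace EntropyFlux

variable {Q : ℝ → ℝ → ℝ} {L : ℝ}

lemma continuous (h : EntropyFlux Q L) : Continuous fun p : ℝ × ℝ => Q p.1 p.2 := by
  rw [continuous_iff_continuousAt]
  rintro ⟨a, b⟩
  rw [ContinuousAt, tendsto_iff_norm_sub_tendsto_zero]
  have : Tendsto (fun p : ℝ × ℝ => L * (|p.1 - a| + |p.2 - b|)) (𝓝 (a, b)) (𝓝 0) := by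
    have : Continuous (fun p : ℝ × ℝ => L * (|p.1 - a| + |p.2 - b|)) := by fun_prop
    simpa using this.tendsto (a, b)
  exact squeeze_zero (fun _ => norm_nonneg _) (fun p => h.lip _ _ _ _) this

lemma bdd (h : EntropyFlux Q L) {a b : ℝ} (ha : a ∈ Icc (0:ℝ) 1) (hb : b ∈ Icc (0:ℝ) 1) :
    |Q a b| ≤ L := by
  have h1 := h.lip a b b b
  rw [h.diag, sub_zero, sub_self, abs_zero, add_zero] at h1
  refine h1.trans (mul_le_of_le_one_right h.nonneg ?_)
  rw [abs_le]; constructor <;> linarith [ha.1, ha.2, hb.1, hb.2]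

end EntropyFlux

lemma abs_sub_le_one {a b : ℝ} (ha : a ∈ Icc (0:ℝ) 1) (hb : b ∈ Icc (0:ℝ) 1) : |a - b| ≤ 1 := by
  rw [abs_le]; constructor <;> linarith [ha.1, ha.2, hb.1, hb.2]

lemma real_sign_mul_self (x : ℝ) : Real.sign x * x = |x| := by
  rcases lt_trichotomy x 0 with h | h | h
  · rw [Real.sign_of_neg h, abs_of_neg h]; ring
  · simp [h]
  · rw [Real.sign_of_pos h, abs_of_pos h]; ring

/-- Passing from `Φ_0` to the flux `Φ_s` through a line of slope `s` costs exactly `s|a-b|`. -/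
lemma EFlx_eq (f : ℝ → ℝ) (s a b : ℝ) : EFlx f s a b = EFlx f 0 a b - s * |a - b| := by
  rw [← real_sign_mul_self (a - b)]; simp only [EFlx, Flx]; ring

lemma EFlx_symm (f : ℝ → ℝ) (s a b : ℝ) : EFlx f s a b = EFlx f s b a := by
  unfold EFlx; rw [← neg_sub b a, Real.sign_neg]; ring

lemma EFlx_congr {f g : ℝ → ℝ} (s : ℝ) {a b : ℝ} (ha : f a = g a) (hb : f b = g b) :
    EFlx f s a b = EFlx g s a b := by
  simp [EFlx, Flx, ha, hb]

lemma EFlx_lip_left {g : ℝ → ℝ} {L : ℝ} (hg : ∀ a b, |g a - g b| ≤ L * |a - b|) (a a' b : ℝ) :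
    |EFlx g 0 a b - EFlx g 0 a' b| ≤ L * |a - a'| := by
  have e : ∀ x, EFlx g 0 x b = Real.sign (x - b) * (g x - g b) := by intro x; simp [EFlx, Flx]
  -- when `b` separates the two points, each flux is bounded by its own distance to `b`
  have key : ∀ x x', x ≤ b → b ≤ x' →
      |EFlx g 0 x b - EFlx g 0 x' b| ≤ L * |x - x'| := by
    intro x x' hx hx'
    have h1 : |EFlx g 0 x b| ≤ L * |x - b| := by
      rw [e, abs_mul]
      calc _ ≤ 1 * |g x - g b| := by
            gcongr
            rcases Real.sign_apply_eq (x - b) with h | h | h <;> simp [h]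
        _ ≤ _ := by rw [one_mul]; exact hg _ _
    have h2 : |EFlx g 0 x' b| ≤ L * |x' - b| := by
      rw [e, abs_mul]
      calc _ ≤ 1 * |g x' - g b| := by
            gcongr
            rcases Real.sign_apply_eq (x' - b) with h | h | h <;> simp [h]
        _ ≤ _ := by rw [one_mul]; exact hg _ _
    calc _ ≤ |EFlx g 0 x b| + |EFlx g 0 x' b| := abs_sub _ _
      _ ≤ L * (|x - b| + |x' - b|) := by linarith
      _ = _ := by
        rw [abs_of_nonpos (sub_nonpos.2 hx), abs_of_nonneg (sub_nonneg.2 hx'),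
          abs_of_nonpos (sub_nonpos.2 (hx.trans hx'))]; ring
  rcases lt_or_ge a b with h | h <;> rcases lt_or_ge a' b with h' | h'
  · rw [e, e, Real.sign_of_neg (sub_neg.2 h), Real.sign_of_neg (sub_neg.2 h')]
    have := hg a' a
    rw [abs_sub_comm a' a] at this
    convert this using 2; ring
  · exact key _ _ h.le h'
  · have := key _ _ h'.le h
    rwa [abs_sub_comm, abs_sub_comm a a']
  · have e' : ∀ x, b ≤ x → EFlx g 0 x b = g x - g b := by
      intro x hx
      rcases hx.eq_or_lt with rfl | hx
      · simp [e]
      · rw [e, Real.sign_of_pos (sub_pos.2 hx), one_mul]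
    rw [e' _ h, e' _ h']
    convert hg a a' using 2; ring

lemma entropyFlux_EFlx {g : ℝ → ℝ} {L : ℝ} (hL : 0 ≤ L) (hg : ∀ a b, |g a - g b| ≤ L * |a - b|) :
    EntropyFlux (EFlx g 0) L where
  nonneg := hL
  lip a b a' b' := by
    have h1 := EFlx_lip_left hg a a' b
    have h2 := EFlx_lip_left hg b b' a'
    rw [EFlx_symm g 0 b, EFlx_symm g 0 b'] at h2
    calc _ ≤ |EFlx g 0 a b - EFlx g 0 a' b| + |EFlx g 0 a' b - EFlx g 0 a' b'| := abs_sub_le _ _ _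
      _ ≤ _ := by linarith
  symm := EFlx_symm g 0
  diag a := by simp [EFlx]

/-! ### Integrability and test functions -/

/-- A bounded measurable function vanishing off a set of finite measure is integrable. -/
lemma integrable_of_bdd {α : Type*} [MeasurableSpace α] {μ : Measure α} {F : α → ℝ} {s : Set α}
    {C : ℝ} (hF : Measurable F) (hs : μ s ≠ ⊤) (h0 : ∀ x, x ∉ s → F x = 0)
    (hC : ∀ x, |F x| ≤ C) : Integrable F μ := by
  have : IntegrableOn F s μ :=
    Measure.integrableOn_of_bounded hs hF.aestronglyMeasurable (M := C)
      (Eventually.of_forall hC)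
  rwa [integrableOn_iff_integrable_of_support_subset] at this
  intro x hx
  by_contra h
  exact hx (h0 x h)

namespace TestFun
variable {φ : ℝ × ℝ → ℝ}

lemma continuous (h : TestFun φ) : Continuous φ := h.1.continuous

lemma differentiable (h : TestFun φ) : Differentiable ℝ φ :=
  h.1.differentiable (by simp)

lemma continuous_fderiv (h : TestFun φ) (v : ℝ × ℝ) : Continuous fun p => fderiv ℝ φ p v :=
  (h.1.continuous_fderiv (by simp)).clm_apply continuous_const

lemma continuous_pT (h : TestFun φ) : Continuous (pT φ) := h.continuous_fderiv _
lemma continuous_pX (h : TestFun φ) : Continuous (pX φ) := h.continuous_fderiv _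

lemma hasCompactSupport_pT (h : TestFun φ) : HasCompactSupport (pT φ) :=
  h.2.1.fderiv_apply (𝕜 := ℝ) _
lemma hasCompactSupport_pX (h : TestFun φ) : HasCompactSupport (pX φ) :=
  h.2.1.fderiv_apply (𝕜 := ℝ) _

end TestFun

/-- Integrability on the doubled space of `B(p,p') A(p) g(p-p')` with `B` bounded. -/
lemma integrable_doubled {B : (ℝ × ℝ) × (ℝ × ℝ) → ℝ} {A g : ℝ × ℝ → ℝ} {C : ℝ}
    (hB : Measurable B) (hBC : ∀ P, |B P| ≤ C) (hA : Continuous A) (hAc : HasCompactSupport A)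
    (hg : Continuous g) (hgc : HasCompactSupport g) :
    Integrable fun P : (ℝ × ℝ) × (ℝ × ℝ) => B P * (A P.1 * g (P.1 - P.2)) := by
  have h1 : Integrable fun P : (ℝ × ℝ) × (ℝ × ℝ) => A P.1 * g (P.1 - P.2) := by
    apply Continuous.integrable_of_hasCompactSupport (by fun_prop)
    refine HasCompactSupport.intro (K := (fun P : (ℝ × ℝ) × (ℝ × ℝ) => (P.1, P.1 - P.2)) ''
      (tsupport A ×ˢ tsupport g)) ((hAc.isCompact.prod hgc.isCompact).image (by fun_prop)) ?_
    intro P hP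
    by_contra h
    apply hP
    refine ⟨(P.1, P.1 - P.2), ⟨?_, ?_⟩, by ext <;> simp⟩
    · exact subset_tsupport _ (left_ne_zero_of_mul h)
    · exact subset_tsupport _ (right_ne_zero_of_mul h)
  exact h1.bdd_mul hB.aestronglyMeasurable (Eventually.of_forall hBC)

/-! ### Doubling of variables: the doubled inequality -/

/-- The Kruzhkov integrand `|u-κ| ∂ₜψ + H(t) Q(u,κ) ∂ₓψ` on the whole plane. The weight `H` switches
the flux off for `t ≤ 0`, where the unknown is frozen at its initial datum. -/
def entDen (Q : ℝ → ℝ → ℝ) (H : ℝ → ℝ) (u : ℝ × ℝ → ℝ) (κ : ℝ × ℝ → ℝ) (ψ : ℝ × ℝ → ℝ)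
    (p : ℝ × ℝ) : ℝ :=
  |u p - κ p| * pT ψ p + H p.2 * Q (u p) (κ p) * pX ψ p

/-- The Kruzhkov entropy inequalities on the whole plane, for the flux `H(t) Q`, against test
functions whose support misses `G`. -/
def EntIneq (Q : ℝ → ℝ → ℝ) (H : ℝ → ℝ) (G : Set (ℝ × ℝ)) (u : ℝ × ℝ → ℝ) : Prop :=
  ∀ κ ∈ Icc (0:ℝ) 1, ∀ ψ, TestFun ψ → Disjoint (tsupport ψ) G →
    0 ≤ ∫ p, entDen Q H u (fun _ => κ) ψ p

lemma fderiv_prod_shift {ψ k : ℝ × ℝ → ℝ} (hψ : TestFun ψ) (hk : TestFun k) (p p' e : ℝ × ℝ) :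
    fderiv ℝ (fun x => ψ x * k (x - p')) p e
      = fderiv ℝ ψ p e * k (p - p') + ψ p * fderiv ℝ k (p - p') e := by
  have h2 : HasFDerivAt (fun x => k (x - p')) (fderiv ℝ k (p - p')) p :=
    (hk.differentiable _).hasFDerivAt.comp p ((hasFDerivAt_id p).sub_const p')
  rw [((hψ.differentiable p).hasFDerivAt.fun_mul h2).fderiv]
  simp; ring

lemma fderiv_reflect_shift {k : ℝ × ℝ → ℝ} (hk : TestFun k) (c : ℝ) (p p' e : ℝ × ℝ) :
    fderiv ℝ (fun x => c * k (p - x)) p' e = -(c * fderiv ℝ k (p - p') e) := by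
  have h2 : HasFDerivAt (fun x => k (p - x)) ((fderiv ℝ k (p - p')).comp (-(ContinuousLinearMap.id ℝ (ℝ × ℝ)))) p' :=
    (hk.differentiable _).hasFDerivAt.comp p' ((hasFDerivAt_id p').const_sub p)
  rw [(h2.const_mul c).fderiv]
  simp

/-- Doubling of variables. The inequality for `u` is tested with `p ↦ ψ(p) k(p-p')` at the constant
`v(p')`, the one for `v` with `p' ↦ ψ(p) k(p-p')` at the constant `u(p)`, and the two are added after
integration in the remaining variable. The derivatives of `k` cancel, except for the term due to
the dependence of `H` on time. -/
lemma doubled_ineq {Q : ℝ → ℝ → ℝ} {L : ℝ} (hQ : EntropyFlux Q L) {H : ℝ → ℝ} (hH : Measurable H)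
    (hH1 : ∀ t, |H t| ≤ 1) {G : Set (ℝ × ℝ)} {u v : ℝ × ℝ → ℝ} (hu : Measurable u)
    (hv : Measurable v) (hu1 : ∀ p, u p ∈ Icc (0:ℝ) 1) (hv1 : ∀ p, v p ∈ Icc (0:ℝ) 1)
    (hue : EntIneq Q H G u) (hve : EntIneq Q H G v)
    {ψ k : ℝ × ℝ → ℝ} (hψ : TestFun ψ) (hk : TestFun k) (hψG : Disjoint (tsupport ψ) G)
    (hkG : ∀ p ∈ tsupport ψ, ∀ p', p - p' ∈ tsupport k → p' ∉ G) :
    let W : (ℝ × ℝ) × (ℝ × ℝ) → ℝ := fun P =>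
        (|u P.1 - v P.2| * pT ψ P.1 + H P.1.2 * Q (u P.1) (v P.2) * pX ψ P.1) * k (P.1 - P.2)
        + (H P.1.2 - H P.2.2) * Q (u P.1) (v P.2) * ψ P.1 * pX k (P.1 - P.2)
    Integrable W ∧ 0 ≤ ∫ P, W P := by
  intro W
  have hQm := hQ.continuous.measurable
  have mQ : Measurable fun P : (ℝ × ℝ) × (ℝ × ℝ) => Q (u P.1) (v P.2) :=
    hQm.comp ((hu.comp measurable_fst).prodMk (hv.comp measurable_snd))
  have mN : Measurable fun P : (ℝ × ℝ) × (ℝ × ℝ) => |u P.1 - v P.2| :=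
    ((hu.comp measurable_fst).sub (hv.comp measurable_snd)).abs
  have mH1 : Measurable fun P : (ℝ × ℝ) × (ℝ × ℝ) => H P.1.2 := hH.comp (by fun_prop)
  have mH2 : Measurable fun P : (ℝ × ℝ) × (ℝ × ℝ) => H P.2.2 := hH.comp (by fun_prop)
  have bN : ∀ P : (ℝ × ℝ) × (ℝ × ℝ), |(|u P.1 - v P.2|)| ≤ 1 := fun P => by
    rw [abs_abs]; exact abs_sub_le_one (hu1 _) (hv1 _)
  have bH : ∀ (t : ℝ) (P : (ℝ × ℝ) × (ℝ × ℝ)), |H t * Q (u P.1) (v P.2)| ≤ L := fun t P => by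
    rw [abs_mul]
    calc _ ≤ 1 * L := mul_le_mul (hH1 _) (hQ.bdd (hu1 _) (hv1 _)) (abs_nonneg _) zero_le_one
      _ = L := one_mul L
  have i1 := integrable_doubled mN bN hψ.continuous_pT hψ.hasCompactSupport_pT hk.continuous hk.2.1
  have i2 := integrable_doubled mN bN hψ.continuous hψ.2.1 hk.continuous_pT hk.hasCompactSupport_pT
  have i3 := integrable_doubled (mH1.mul mQ) (fun P => bH _ P) hψ.continuous_pX
    hψ.hasCompactSupport_pX hk.continuous hk.2.1
  have i4 := integrable_doubled (mH1.mul mQ) (fun P => bH _ P) hψ.continuous hψ.2.1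
    hk.continuous_pX hk.hasCompactSupport_pX
  have i5 := integrable_doubled (mH2.mul mQ) (fun P => bH _ P) hψ.continuous hψ.2.1
    hk.continuous_pX hk.hasCompactSupport_pX
  let W₁ : (ℝ × ℝ) × (ℝ × ℝ) → ℝ := fun P =>
    |u P.1 - v P.2| * (pT ψ P.1 * k (P.1 - P.2) + ψ P.1 * pT k (P.1 - P.2))
      + H P.1.2 * Q (u P.1) (v P.2) * (pX ψ P.1 * k (P.1 - P.2) + ψ P.1 * pX k (P.1 - P.2))
  let W₂ : (ℝ × ℝ) × (ℝ × ℝ) → ℝ := fun P =>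
    -(|u P.1 - v P.2| * (ψ P.1 * pT k (P.1 - P.2))
      + H P.2.2 * Q (u P.1) (v P.2) * (ψ P.1 * pX k (P.1 - P.2)))
  have iW1 : Integrable W₁ := ((i1.add i2).add (i3.add i4)).congr
    (Eventually.of_forall fun P => by simp only [W₁, Pi.add_apply, Pi.mul_apply]; ring)
  have iW2 : Integrable W₂ := (i2.add i5).neg.congr
    (Eventually.of_forall fun P => by
      simp only [W₂, Pi.add_apply, Pi.neg_apply, Pi.mul_apply])
  have eW : W = fun P => W₁ P + W₂ P := by
    funext P; simp only [W, W₁, W₂]; ring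
  refine ⟨by rw [eW]; exact iW1.add iW2, ?_⟩
  rw [eW, integral_add iW1 iW2]
  apply add_nonneg
  · rw [Measure.volume_eq_prod, integral_prod_symm _ iW1]
    apply integral_nonneg
    intro p'
    have ht : TestFun fun x => ψ x * k (x - p') := by
      refine ⟨hψ.1.mul (hk.1.comp (contDiff_id.sub contDiff_const)), hψ.2.1.mul_right, fun p => mul_nonneg (hψ.2.2 _) (hk.2.2 _)⟩
    have := hue (v p') (hv1 p') _ ht (hψG.mono_left (tsupport_mul_subset_left (f := ψ)))
    refine this.trans_eq (integral_congr_ae (Eventually.of_forall fun p => ?_))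
    simp only [entDen, pT, pX, fderiv_prod_shift hψ hk, W₁]
  · rw [Measure.volume_eq_prod, integral_prod _ iW2]
    apply integral_nonneg
    intro p
    have hsup : tsupport (fun x => ψ p * k (p - x)) ⊆ (fun x => p - x) ⁻¹' tsupport k := by
      apply closure_minimal _ ((isClosed_tsupport k).preimage (by fun_prop))
      intro x hx
      exact subset_tsupport _ (right_ne_zero_of_mul hx)
    have ht : TestFun fun x => ψ p * k (p - x) := by
      refine ⟨contDiff_const.mul (hk.1.comp (contDiff_const.sub contDiff_id)), ?_,
        fun p => mul_nonneg (hψ.2.2 _) (hk.2.2 _)⟩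
      refine HasCompactSupport.intro (K := (fun z => p - z) '' tsupport k)
        (hk.2.1.isCompact.image (by fun_prop)) fun x hx => ?_
      by_contra h
      exact hx ⟨p - x, subset_tsupport _ (right_ne_zero_of_mul h), by simp⟩
    have hd : Disjoint (tsupport fun x => ψ p * k (p - x)) G := by
      rw [Set.disjoint_left]
      intro x hx
      by_cases h0 : ψ p = 0
      · simp [h0, tsupport] at hx
      · exact hkG p (subset_tsupport _ h0) x (hsup hx)
    have := hve (u p) (hu1 p) _ ht hd
    refine this.trans_eq (integral_congr_ae (Eventually.of_forall fun p' => ?_))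
    simp only [entDen, pT, pX, fderiv_reflect_shift hk, W₂]
    rw [abs_sub_comm, hQ.symm (v p')]
    ring

/-! ### Doubling of variables: the limit on the diagonal -/

/-- Continuity of translations in `L¹_loc`, with the compactly supported weight `|A|`. The values of
`v` on a compact neighbourhood of the weight's support are approximated by a continuous function. -/
lemma translation_small {v A : ℝ × ℝ → ℝ} (hv : Measurable v) (hv1 : ∀ p, v p ∈ Icc (0:ℝ) 1)
    (hA : Continuous A) (hAc : HasCompactSupport A) {ε : ℝ} (hε : 0 < ε) :
    ∃ δ > 0, ∀ z : ℝ × ℝ, ‖z‖ < δ → ∫ p, |A p| * |v p - v (p - z)| ≤ ε := by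
  obtain ⟨C, hC⟩ := hA.bounded_above_of_compact_support hAc
  have hC0 : 0 ≤ C := (norm_nonneg _).trans (hC 0)
  set K := Metric.cthickening 1 (tsupport A) with hK
  have hKc : IsCompact K := hAc.isCompact.cthickening
  set V := K.indicator v with hV
  have hVm : Measurable V := hv.indicator hKc.measurableSet
  have hVi : Integrable V := integrable_of_bdd (C := 1) hVm hKc.measure_ne_top
    (fun x hx => indicator_of_notMem hx _) (fun x => by
      by_cases h : x ∈ K
      · rw [hV, indicator_of_mem h, abs_le]; constructor <;> linarith [(hv1 x).1, (hv1 x).2]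
      · simp [hV, h])
  set η := ε / (4 * (C + 1)) with hη
  have hη0 : 0 < η := by positivity
  obtain ⟨w, hwc, hwV, hwcont, hwi⟩ := hVi.exists_hasCompactSupport_integral_sub_le hη0
  set K' := Metric.cthickening 1 (tsupport w) with hK'
  have hK'c : IsCompact K' := hwc.isCompact.cthickening
  set m := (volume K').toReal with hm
  have hm0 : 0 ≤ m := ENNReal.toReal_nonneg
  obtain ⟨δ, hδ0, hδ⟩ := Metric.uniformContinuous_iff.1 (hwc.uniformContinuous_of_continuous hwcont)
    (η / (m + 1)) (by positivity)
  refine ⟨min δ 1, by positivity, fun z hz => ?_⟩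
  have hzδ : ‖z‖ < δ := hz.trans_le (min_le_left _ _)
  have hz1 : ‖z‖ ≤ 1 := (hz.trans_le (min_le_right _ _)).le
  have iV' : Integrable fun p => V (p - z) := hVi.comp_sub_right z
  have iw' : Integrable fun p => w (p - z) := hwi.comp_sub_right z
  have j1 : Integrable fun p => |V p - w p| := (hVi.sub hwi).abs
  have j2 : Integrable fun p => |w p - w (p - z)| := (hwi.sub iw').abs
  have j3 : Integrable fun p => |V (p - z) - w (p - z)| := (iV'.sub iw').abs
  have j12 : Integrable fun p => |V p - w p| + |w p - w (p - z)| := j1.add j2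
  have h3 : ∫ p, |w p - w (p - z)| ≤ η := by
    have hle : ∀ p, |w p - w (p - z)| ≤ K'.indicator (fun _ => η / (m + 1)) p := by
      intro p
      by_cases hp : p ∈ K'
      · rw [indicator_of_mem hp]
        have := hδ (a := p) (b := p - z) (by simpa [dist_eq_norm] using hzδ)
        exact this.le
      · rw [indicator_of_notMem hp]
        have h1 : w p = 0 := by
          by_contra h
          exact hp (Metric.self_subset_cthickening _ (subset_tsupport _ h))
        have h2 : w (p - z) = 0 := by
          by_contra h
          refine hp (Metric.mem_cthickening_of_dist_le p (p - z) 1 _ (subset_tsupport _ h) ?_)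
          simpa [dist_eq_norm] using hz1
        simp [h1, h2]
    calc _ ≤ ∫ p, K'.indicator (fun _ => η / (m + 1)) p := by
          refine integral_mono (hwi.sub iw').abs ?_ hle
          rw [integrable_indicator_iff hK'c.measurableSet]
          exact integrableOn_const hK'c.measure_ne_top
      _ = m * (η / (m + 1)) := by
          rw [integral_indicator hK'c.measurableSet, setIntegral_const]; rfl
      _ ≤ η := by
          rw [mul_div_assoc', div_le_iff₀ (by positivity)]; nlinarith
  have h1 : ∫ p, |V p - w p| ≤ η := hwV
  have h2 : ∫ p, |V (p - z) - w (p - z)| ≤ η := by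
    rw [integral_sub_right_eq_self (fun p => |V p - w p|)]; exact hwV
  have hVz : ∫ p, |V p - V (p - z)| ≤ 3 * η := by
    calc _ ≤ ∫ p, (|V p - w p| + |w p - w (p - z)| + |V (p - z) - w (p - z)|) := by
          refine integral_mono (hVi.sub iV').abs
            (j12.add j3) fun p => ?_
          have := abs_sub_le (V p) (w p) (V (p - z))
          have := abs_sub_le (w p) (w (p - z)) (V (p - z))
          rw [abs_sub_comm (w (p - z))] at this
          show |V p - V (p - z)| ≤ |V p - w p| + |w p - w (p - z)| + |V (p - z) - w (p - z)|
          linarith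
      _ = _ := by
          rw [integral_add j12 j3, integral_add j1 j2]
      _ ≤ _ := by linarith
  calc _ ≤ ∫ p, C * |V p - V (p - z)| := by
        refine integral_mono_of_nonneg (Eventually.of_forall fun p => by positivity)
          ((hVi.sub iV').abs.const_mul C) (Eventually.of_forall fun p => ?_)
        by_cases hp : p ∈ tsupport A
        · have e1 : V p = v p := indicator_of_mem (Metric.self_subset_cthickening _ hp) _
          have e2 : V (p - z) = v (p - z) := indicator_of_mem
            (Metric.mem_cthickening_of_dist_le (p - z) p 1 _ hp (by simpa [dist_eq_norm] using hz1)) _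
          simp only [e1, e2]
          exact mul_le_mul_of_nonneg_right (hC p) (abs_nonneg _)
        · simp only [image_eq_zero_of_notMem_tsupport hp, abs_zero, zero_mul]
          positivity
    _ = C * ∫ p, |V p - V (p - z)| := integral_const_mul _ _
    _ ≤ C * (3 * η) := by gcongr
    _ ≤ ε := by
        rw [hη, show C * (3 * (ε / (4 * (C + 1)))) = (3 * C * ε) / (4 * (C + 1)) by ring,
          div_le_iff₀ (by positivity)]
        nlinarith [mul_nonneg hC0 hε.le]

/-- Anisotropic mollifiers: nonnegative kernels of mass one, supported in the ball of radius `h`,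
whose width `τ` in time can be taken arbitrarily small while `∂ₓk` keeps an `L¹` bound `B` depending
only on `h`. -/
lemma exists_kernel {h : ℝ} (hh : 0 < h) : ∃ B : ℝ, 0 ≤ B ∧ ∀ τ, 0 < τ → τ ≤ h →
    ∃ k : ℝ × ℝ → ℝ, TestFun k ∧ (∀ z ∈ tsupport k, ‖z‖ ≤ h) ∧ ∫ z, k z = 1 ∧
      (∀ z, pX k z ≠ 0 → |z.2| ≤ τ) ∧ ∫ z, |pX k z| ≤ B := by
  let b : ContDiffBump (0:ℝ) := ⟨h / 2, h, by positivity, by linarith⟩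
  refine ⟨∫ x, |deriv (b.normed volume) x|, integral_nonneg fun _ => abs_nonneg _, ?_⟩
  intro τ hτ hτh
  let c : ContDiffBump (0:ℝ) := ⟨τ / 2, τ, by positivity, by linarith⟩
  set b' := b.normed volume with hb'
  set c' := c.normed volume with hc'
  have hbs : ContDiff ℝ (⊤ : ℕ∞) b' := b.contDiff_normed
  have hcs : ContDiff ℝ (⊤ : ℕ∞) c' := c.contDiff_normed
  have hb0 : ∀ x, b' x ≠ 0 → |x| ≤ h := fun x hx => by
    have : x ∈ Function.support b' := hx
    rw [hb', b.support_normed_eq, Metric.mem_ball, dist_zero_right, Real.norm_eq_abs] at this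
    exact this.le
  have hc0 : ∀ x, c' x ≠ 0 → |x| ≤ τ := fun x hx => by
    have : x ∈ Function.support c' := hx
    rw [hc', c.support_normed_eq, Metric.mem_ball, dist_zero_right, Real.norm_eq_abs] at this
    exact this.le
  have hpX : ∀ z : ℝ × ℝ, pX (fun z : ℝ × ℝ => b' z.1 * c' z.2) z = deriv b' z.1 * c' z.2 := by
    intro z
    have h1 : HasFDerivAt (fun z : ℝ × ℝ => b' z.1) ((deriv b' z.1) • ContinuousLinearMap.fst ℝ ℝ ℝ) z :=
      ((hbs.differentiable (by simp) z.1).hasDerivAt).comp_hasFDerivAt z hasFDerivAt_fst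
    have h2 : HasFDerivAt (fun z : ℝ × ℝ => c' z.2) ((deriv c' z.2) • ContinuousLinearMap.snd ℝ ℝ ℝ) z :=
      ((hcs.differentiable (by simp) z.2).hasDerivAt).comp_hasFDerivAt z hasFDerivAt_snd
    rw [pX, (h1.fun_mul h2).fderiv]
    simp; ring
  have hsub : ∀ z ∈ tsupport (fun z : ℝ × ℝ => b' z.1 * c' z.2), ‖z‖ ≤ h := by
    intro z hz
    have : tsupport (fun z : ℝ × ℝ => b' z.1 * c' z.2) ⊆ Metric.closedBall 0 h := by
      apply closure_minimal _ Metric.isClosed_closedBall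
      intro z hz
      rw [mem_closedBall_zero_iff, Prod.norm_def]
      exact max_le (hb0 _ (left_ne_zero_of_mul hz)) ((hc0 _ (right_ne_zero_of_mul hz)).trans hτh)
    simpa using this hz
  refine ⟨fun z => b' z.1 * c' z.2, ⟨(hbs.comp contDiff_fst).mul (hcs.comp contDiff_snd), ?_, ?_⟩,
    hsub, ?_, ?_, ?_⟩
  · exact (isCompact_closedBall (0 : ℝ × ℝ) h).of_isClosed_subset (isClosed_tsupport _)
      (fun z hz => by simpa using hsub z hz)
  · exact fun z => mul_nonneg (b.nonneg_normed _) (c.nonneg_normed _)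
  · rw [Measure.volume_eq_prod, integral_prod_mul (f := b') (g := c'), b.integral_normed, c.integral_normed, one_mul]
  · intro z hz
    rw [hpX] at hz
    exact hc0 _ (right_ne_zero_of_mul hz)
  -- the norm of `∂ₓk` factors, and the factor in time has mass one whatever `τ`
  · simp_rw [hpX, abs_mul]
    rw [Measure.volume_eq_prod, integral_prod_mul (f := fun x => |deriv b' x|) (g := fun x => |c' x|)]
    have : ∫ x, |c' x| = 1 := by
      rw [← c.integral_normed (μ := volume)]
      exact integral_congr_ae (Eventually.of_forall fun x => abs_of_nonneg (c.nonneg_normed x))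
    rw [this, mul_one]

/-- Kato inequality away from `G`, on the whole plane. The weight `H` is constant on each of the two
sides of `t = 0` (this is `hHc`), so the term with `H(t)-H(t')` left by `doubled_ineq` lives on the
strip `|t| ≤ τ`. It is at most a multiple of `τ` when the kernel is anisotropic: the space scale `h` is
fixed first, by continuity of translations, and the time scale `τ` is then chosen small in terms of
`h`. -/
lemma doubling {Q : ℝ → ℝ → ℝ} {L : ℝ} (hQ : EntropyFlux Q L) {H : ℝ → ℝ} (hH : Measurable H)
    (hH1 : ∀ t, |H t| ≤ 1) (hHc : ∀ t t', |t - t'| < |t| → H t = H t')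
    {G : Set (ℝ × ℝ)} {u v : ℝ × ℝ → ℝ} (hu : Measurable u)
    (hv : Measurable v) (hu1 : ∀ p, u p ∈ Icc (0:ℝ) 1) (hv1 : ∀ p, v p ∈ Icc (0:ℝ) 1)
    (hue : EntIneq Q H G u) (hve : EntIneq Q H G v)
    {ψ : ℝ × ℝ → ℝ} (hψ : TestFun ψ) (hψG : Disjoint (tsupport ψ) (closure G)) :
    0 ≤ ∫ p, entDen Q H u v ψ p := by
  refine le_of_forall_pos_le_add fun ε hε => ?_
  have hL := hQ.nonneg
  -- a weight dominating the errors made when `v(p')` is replaced by `v(p)`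
  let A : ℝ × ℝ → ℝ := fun p => |pT ψ p| + L * |pX ψ p|
  have hAcont : Continuous A :=
    hψ.continuous_pT.abs.add (continuous_const.mul hψ.continuous_pX.abs)
  have hA0 : ∀ p, 0 ≤ A p := fun p => by positivity
  have hAc : HasCompactSupport A := by
    refine HasCompactSupport.intro (hψ.hasCompactSupport_pT.isCompact.union
      hψ.hasCompactSupport_pX.isCompact) fun p hp => ?_
    simp only [mem_union, not_or] at hp
    simp [A, image_eq_zero_of_notMem_tsupport hp.1, image_eq_zero_of_notMem_tsupport hp.2]
  obtain ⟨δ, hδ, htr⟩ := translation_small hv hv1 hAcont hAc (half_pos hε)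
  obtain ⟨d, hd, hdis⟩ := hψG.exists_cthickenings hψ.2.1.isCompact isClosed_closure
  obtain ⟨C, hC⟩ := hψ.continuous.bounded_above_of_compact_support hψ.2.1
  have hC0 : 0 ≤ C := (norm_nonneg _).trans (hC 0)
  obtain ⟨R, hR0, hR⟩ := hψ.2.1.isCompact.isBounded.subset_closedBall_lt 0 (0 : ℝ × ℝ)
  set h := min (δ / 2) d with hh
  have hh0 : 0 < h := by positivity
  obtain ⟨B, hB0, hB⟩ := exists_kernel hh0
  set M := 2 * L * C * B * (4 * R) with hM
  have hM0 : 0 ≤ M := by positivity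
  set τ := min h (ε / 2 / (M + 1)) with hτ
  have hτ0 : 0 < τ := by positivity
  obtain ⟨k, hk, hkh, hk1, hkτ, hkB⟩ := hB τ hτ0 (min_le_left _ _)
  obtain ⟨iW, hW⟩ := doubled_ineq hQ hH hH1 hu hv hu1 hv1 hue hve hψ hk
    (hψG.mono_right subset_closure) (by
      intro p hp p' hp' hG
      refine Set.disjoint_left.1 hdis (Metric.mem_cthickening_of_dist_le p' p d _ hp ?_)
        (Metric.self_subset_cthickening _ (subset_closure hG))
      rw [dist_comm, dist_eq_norm]
      exact (hkh _ hp').trans (min_le_right _ _))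
  have hQm := hQ.continuous.measurable
  have mH1 : Measurable fun P : (ℝ × ℝ) × (ℝ × ℝ) => H P.1.2 := hH.comp (by fun_prop)
  have mH2 : Measurable fun P : (ℝ × ℝ) × (ℝ × ℝ) => H P.2.2 := hH.comp (by fun_prop)
  -- the undoubled integrand against the kernel
  let TK : (ℝ × ℝ) × (ℝ × ℝ) → ℝ := fun P => entDen Q H u v ψ P.1 * k (P.1 - P.2)
  have iTK : Integrable TK := by
    have j1 := integrable_doubled (B := fun P => |u P.1 - v P.1|) (C := 1)
      ((hu.comp measurable_fst).sub (hv.comp measurable_fst)).abs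
      (fun P => by rw [abs_abs]; exact abs_sub_le_one (hu1 _) (hv1 _))
      hψ.continuous_pT hψ.hasCompactSupport_pT hk.continuous hk.2.1
    have j2 := integrable_doubled (B := fun P => H P.1.2 * Q (u P.1) (v P.1)) (C := L)
      (mH1.mul (hQm.comp ((hu.comp measurable_fst).prodMk (hv.comp measurable_fst))))
      (fun P => by
        rw [abs_mul]
        calc _ ≤ 1 * L := mul_le_mul (hH1 _) (hQ.bdd (hu1 _) (hv1 _)) (abs_nonneg _) zero_le_one
          _ = L := one_mul L)
      hψ.continuous_pX hψ.hasCompactSupport_pX hk.continuous hk.2.1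
    exact (j1.add j2).congr (Eventually.of_forall fun P => by
      simp only [TK, entDen, Pi.add_apply]; ring)
  have eTK : ∫ P, TK P = ∫ p, entDen Q H u v ψ p := by
    rw [Measure.volume_eq_prod, integral_prod _ iTK]
    refine integral_congr_ae (Eventually.of_forall fun p => ?_)
    simp only [TK]
    rw [integral_const_mul, integral_sub_left_eq_self (fun z => k z), hk1, mul_one]
  let Z₁ : (ℝ × ℝ) × (ℝ × ℝ) → ℝ := fun P => |v P.1 - v P.2| * (A P.1 * k (P.1 - P.2))
  let Z₂ : (ℝ × ℝ) × (ℝ × ℝ) → ℝ := fun P =>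
    L * |H P.1.2 - H P.2.2| * (|ψ P.1| * |pX k (P.1 - P.2)|)
  have iZ1 : Integrable Z₁ := integrable_doubled (C := 1)
    ((hv.comp measurable_fst).sub (hv.comp measurable_snd)).abs
    (fun P => by rw [abs_abs]; exact abs_sub_le_one (hv1 _) (hv1 _)) hAcont hAc hk.continuous hk.2.1
  have hH2 : ∀ t t', |H t - H t'| ≤ 2 := fun t t' => by
    have := abs_sub (H t) (H t'); have := hH1 t; have := hH1 t'; linarith
  have iZ2 : Integrable Z₂ := integrable_doubled (C := L * 2)
    (measurable_const.mul (mH1.sub mH2).abs)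
    (fun P => by
      change abs (L * |H P.1.2 - H P.2.2|) ≤ L * 2
      rw [abs_mul, abs_abs, abs_of_nonneg hL]
      exact mul_le_mul_of_nonneg_left (hH2 _ _) hL)
    hψ.continuous.abs hψ.2.1.abs hk.continuous_pX.abs hk.hasCompactSupport_pX.abs
  -- first error: translations
  have bZ1 : ∫ P, Z₁ P ≤ ε / 2 := by
    have iZ : Integrable (fun P : (ℝ × ℝ) × (ℝ × ℝ) =>
        |v P.1 - v (P.1 - P.2)| * (A P.1 * k P.2)) := by
      have := (hAcont.integrable_of_hasCompactSupport (μ := volume) hAc).mul_prod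
        (hk.continuous.integrable_of_hasCompactSupport (μ := volume) hk.2.1)
      refine this.bdd_mul (c := 1) ?_ (Eventually.of_forall fun P => ?_)
      · exact ((hv.comp measurable_fst).sub
          (hv.comp (measurable_fst.sub measurable_snd))).abs.aestronglyMeasurable
      · rw [Real.norm_eq_abs, abs_abs]; exact abs_sub_le_one (hv1 _) (hv1 _)
    have e1 : ∫ P, Z₁ P = ∫ p, ∫ z, |v p - v (p - z)| * (A p * k z) := by
      rw [Measure.volume_eq_prod, integral_prod _ iZ1]
      refine integral_congr_ae (Eventually.of_forall fun p => ?_)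
      simp only [Z₁]
      rw [← integral_sub_left_eq_self _ volume p]
      simp
    rw [e1, integral_integral_swap iZ]
    have ik : Integrable k := hk.continuous.integrable_of_hasCompactSupport hk.2.1
    calc _ ≤ ∫ z, ε / 2 * k z := by
          refine integral_mono_of_nonneg (Eventually.of_forall fun z => ?_) (ik.const_mul _)
            (Eventually.of_forall fun z => ?_)
          · exact integral_nonneg fun p =>
              mul_nonneg (abs_nonneg _) (mul_nonneg (hA0 _) (hk.2.2 _))
          · by_cases hz : k z = 0
            · simp [hz]
            · have hz' : ‖z‖ < δ := by
                have h1 := hkh z (subset_tsupport _ hz)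
                have h2 : h ≤ δ / 2 := min_le_left _ _
                linarith
              have h3 := htr z hz'
              calc _ = ∫ p, |A p| * |v p - v (p - z)| * k z := by
                    refine integral_congr_ae (Eventually.of_forall fun p => ?_)
                    simp only [abs_of_nonneg (hA0 p)]; ring
                _ = (∫ p, |A p| * |v p - v (p - z)|) * k z := integral_mul_const _ _
                _ ≤ _ := mul_le_mul_of_nonneg_right h3 (hk.2.2 _)
      _ = ε / 2 := by rw [integral_const_mul, hk1, mul_one]
  -- second error: the strip around `t = 0`
  have bZ2 : ∫ P, Z₂ P ≤ ε / 2 := by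
    rw [Measure.volume_eq_prod, integral_prod _ iZ2]
    set s : Set (ℝ × ℝ) := Icc (-R) R ×ˢ Icc (-τ) τ with hs
    have hsm : MeasurableSet s := measurableSet_Icc.prod measurableSet_Icc
    have hsc : IsCompact s := isCompact_Icc.prod isCompact_Icc
    have hsv : volume.real s = 2 * R * (2 * τ) := by
      rw [hs, Measure.volume_eq_prod, measureReal_prod_prod, Real.volume_real_Icc_of_le (by linarith),
        Real.volume_real_Icc_of_le (by linarith)]
      ring
    have ip : Integrable fun z => |pX k z| :=
      hk.continuous_pX.abs.integrable_of_hasCompactSupport hk.hasCompactSupport_pX.abs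
    calc _ ≤ ∫ p, s.indicator (fun _ => 2 * L * C * B) p := by
          refine integral_mono_of_nonneg (Eventually.of_forall fun p => ?_) ?_
            (Eventually.of_forall fun p => ?_)
          · exact integral_nonneg fun p' => by positivity
          · rw [integrable_indicator_iff hsm]; exact integrableOn_const hsc.measure_ne_top
          · by_cases hp : p ∈ s
            · rw [indicator_of_mem hp]
              calc _ ≤ ∫ p', 2 * L * C * |pX k (p - p')| := by
                    refine integral_mono_of_nonneg (Eventually.of_forall fun p' => by positivity)
                      ((ip.comp_sub_left p).const_mul _) (Eventually.of_forall fun p' => ?_)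
                    have := hH2 p.2 p'.2
                    have h2 : |ψ p| ≤ C := hC p
                    calc _ ≤ L * 2 * (C * |pX k (p - p')|) := by
                          simp only [Z₂]; gcongr
                      _ = _ := by ring
                _ = 2 * L * C * ∫ z, |pX k z| := by
                    rw [integral_const_mul, integral_sub_left_eq_self (fun z => |pX k z|)]
                _ ≤ _ := by gcongr
            · rw [indicator_of_notMem hp]
              refine le_of_eq (integral_eq_zero_of_ae (Eventually.of_forall fun p' => ?_))
              by_contra hne
              apply hp
              have hψp : ψ p ≠ 0 := fun h0 => hne (by simp [Z₂, h0])
              have hkp : pX k (p - p') ≠ 0 := fun h0 => hne (by simp [Z₂, h0])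
              have hHp : H p.2 ≠ H p'.2 := fun h0 => hne (by simp [Z₂, h0])
              have h1 := hR (subset_tsupport _ hψp)
              rw [mem_closedBall_zero_iff, Prod.norm_def] at h1
              have h2 := hkτ _ hkp
              -- `H` differs at the two times, so they lie on different sides of `0`
              have h3 : |p.2| ≤ |p.2 - p'.2| := not_lt.1 fun h => hHp (hHc _ _ h)
              exact ⟨abs_le.1 ((le_max_left _ _).trans h1), abs_le.1 (h3.trans h2)⟩
      _ = M * τ := by
          rw [integral_indicator hsm, setIntegral_const, hsv, hM, smul_eq_mul]; ring
      _ ≤ M * (ε / 2 / (M + 1)) := by gcongr; exact min_le_right _ _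
      _ ≤ ε / 2 := by
          rw [mul_div_assoc', div_le_iff₀ (by positivity)]; nlinarith
  -- the doubled integrand is the undoubled one up to the two errors
  have key : ∀ P : (ℝ × ℝ) × (ℝ × ℝ),
      (|u P.1 - v P.2| * pT ψ P.1 + H P.1.2 * Q (u P.1) (v P.2) * pX ψ P.1) * k (P.1 - P.2)
        + (H P.1.2 - H P.2.2) * Q (u P.1) (v P.2) * ψ P.1 * pX k (P.1 - P.2)
        ≤ TK P + Z₁ P + Z₂ P := by
    rintro ⟨p, p'⟩
    have hk0 := hk.2.2 (p - p')
    have e1 : (|u p - v p'| - |u p - v p|) * pT ψ p ≤ |v p - v p'| * |pT ψ p| := by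
      refine (le_abs_self _).trans ?_
      rw [abs_mul]
      refine mul_le_mul_of_nonneg_right ?_ (abs_nonneg _)
      refine (abs_abs_sub_abs_le _ _).trans_eq ?_
      congr 1; ring
    have e2 : H p.2 * (Q (u p) (v p') - Q (u p) (v p)) * pX ψ p
        ≤ L * |v p - v p'| * |pX ψ p| := by
      refine (le_abs_self _).trans ?_
      rw [abs_mul, abs_mul]
      refine mul_le_mul_of_nonneg_right ?_ (abs_nonneg _)
      have := hQ.lip (u p) (v p') (u p) (v p)
      rw [sub_self, abs_zero, zero_add, abs_sub_comm (v p')] at this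
      calc _ ≤ 1 * (L * |v p - v p'|) := mul_le_mul (hH1 _) this (abs_nonneg _) zero_le_one
        _ = _ := one_mul _
    have e3 : (H p.2 - H p'.2) * Q (u p) (v p') * ψ p * pX k (p - p')
        ≤ L * |H p.2 - H p'.2| * (|ψ p| * |pX k (p - p')|) := by
      refine (le_abs_self _).trans ?_
      rw [abs_mul, abs_mul, abs_mul]
      have := hQ.bdd (hu1 p) (hv1 p')
      calc _ ≤ |H p.2 - H p'.2| * L * |ψ p| * |pX k (p - p')| := by gcongr
        _ = _ := by ring
    have e4 := mul_le_mul_of_nonneg_right (add_le_add e1 e2) hk0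
    simp only [TK, Z₁, Z₂, entDen, A]
    nlinarith [e4, e3]
  have := integral_mono iW ((iTK.add iZ1).add iZ2) key
  have e5 : ∫ P, (TK + Z₁ + Z₂) P = (∫ P, TK P) + (∫ P, Z₁ P) + ∫ P, Z₂ P := by
    rw [integral_add' (iTK.add iZ1) iZ2, integral_add' iTK iZ1]
  rw [e5, eTK] at this
  linarith

/-- Integral over the plane of a density that is `D ∂ₜψ + M ∂ₓψ` for `t > 0` and `D₀(x) ∂ₜψ` for
`t ≤ 0`: the lower half plane integrates in time to the initial term `∫ D₀ ψ(·,0)`. -/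
lemma split_integral {D M : ℝ × ℝ → ℝ} {D₀ : ℝ → ℝ} {C : ℝ} (hD : Measurable D) (hM : Measurable M)
    (hD₀ : Measurable D₀) (bD : ∀ p, |D p| ≤ C) (bM : ∀ p, |M p| ≤ C) (bD₀ : ∀ x, |D₀ x| ≤ C)
    {ψ : ℝ × ℝ → ℝ} (hψ : TestFun ψ) :
    ∫ p : ℝ × ℝ, (if 0 < p.2 then D p * pT ψ p + M p * pX ψ p else D₀ p.1 * pT ψ p)
      = (∫ t in Ioi (0:ℝ), ∫ x, (D (x, t) * pT ψ (x, t) + M (x, t) * pX ψ (x, t)))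
        + ∫ x, D₀ x * ψ (x, 0) := by
  have iT := hψ.continuous_pT.integrable_of_hasCompactSupport (μ := volume) hψ.hasCompactSupport_pT
  have iX := hψ.continuous_pX.integrable_of_hasCompactSupport (μ := volume) hψ.hasCompactSupport_pX
  have i1 : Integrable fun p : ℝ × ℝ => D p * pT ψ p + M p * pX ψ p :=
    (iT.bdd_mul hD.aestronglyMeasurable (Eventually.of_forall bD)).add
      (iX.bdd_mul hM.aestronglyMeasurable (Eventually.of_forall bM))
  have i2 : Integrable fun p : ℝ × ℝ => D₀ p.1 * pT ψ p :=
    iT.bdd_mul (hD₀.comp measurable_fst).aestronglyMeasurable (Eventually.of_forall fun p => bD₀ p.1)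
  have ms : MeasurableSet {p : ℝ × ℝ | 0 < p.2} := measurableSet_lt measurable_const measurable_snd
  have e1 : (fun p : ℝ × ℝ => if 0 < p.2 then D p * pT ψ p + M p * pX ψ p else D₀ p.1 * pT ψ p)
      = {p : ℝ × ℝ | 0 < p.2}.piecewise (fun p => D p * pT ψ p + M p * pX ψ p)
        (fun p => D₀ p.1 * pT ψ p) := by
    funext p; simp [Set.piecewise]
  rw [e1, integral_piecewise ms i1.integrableOn i2.integrableOn]
  have s1 : {p : ℝ × ℝ | 0 < p.2} = univ ×ˢ Ioi 0 := by ext; simp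
  have s2 : {p : ℝ × ℝ | 0 < p.2}ᶜ = univ ×ˢ Iic 0 := by ext; simp
  rw [s2, s1, Measure.volume_eq_prod, ← Measure.prod_restrict, ← Measure.prod_restrict,
    Measure.restrict_univ]
  have j1 : Integrable (fun p : ℝ × ℝ => D p * pT ψ p + M p * pX ψ p)
      ((volume : Measure ℝ).prod (volume.restrict (Ioi (0:ℝ)))) := by
    have := i1.integrableOn (s := univ ×ˢ Ioi (0:ℝ))
    rwa [IntegrableOn, Measure.volume_eq_prod, ← Measure.prod_restrict, Measure.restrict_univ] at this
  have j2 : Integrable (fun p : ℝ × ℝ => D₀ p.1 * pT ψ p)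
      ((volume : Measure ℝ).prod (volume.restrict (Iic (0:ℝ)))) := by
    have := i2.integrableOn (s := univ ×ˢ Iic (0:ℝ))
    rwa [IntegrableOn, Measure.volume_eq_prod, ← Measure.prod_restrict, Measure.restrict_univ] at this
  rw [integral_prod_symm _ j1, integral_prod _ j2]
  congr 1
  refine integral_congr_ae (Eventually.of_forall fun x => ?_)
  simp only
  rw [integral_const_mul]
  congr 1
  have hc : ContDiff ℝ (⊤ : ℕ∞) fun t => ψ (x, t) := hψ.1.comp (contDiff_const.prodMk contDiff_id)
  have hd : ∀ t, deriv (fun t => ψ (x, t)) t = pT ψ (x, t) := fun t => by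
    have h1 : HasDerivAt (fun t : ℝ => (x, t)) ((0:ℝ), (1:ℝ)) t :=
      (hasDerivAt_const t x).prodMk (hasDerivAt_id t)
    exact ((hψ.differentiable (x, t)).hasFDerivAt.comp_hasDerivAt t h1).deriv
  simp_rw [← hd]
  refine HasCompactSupport.integral_Iic_deriv_eq (hc.of_le (by exact_mod_cast le_top)) ?_ 0
  refine HasCompactSupport.intro (K := Prod.snd '' tsupport ψ)
    (hψ.2.1.isCompact.image continuous_snd) fun t ht => ?_
  by_contra h0
  exact ht ⟨(x, t), subset_tsupport _ h0, rfl⟩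

/-! ### Integrals over the half plane -/

/-- Lebesgue measure on the half plane `t > 0`. -/
abbrev halfVol : Measure (ℝ × ℝ) := (volume : Measure ℝ).prod (volume.restrict (Ioi (0:ℝ)))

lemma halfVol_eq : halfVol = (volume : Measure (ℝ × ℝ)).restrict (univ ×ˢ Ioi (0:ℝ)) := by
  rw [halfVol, Measure.volume_eq_prod, ← Measure.prod_restrict, Measure.restrict_univ]

lemma halfVol_integrable {F : ℝ × ℝ → ℝ} (h : Integrable F) : Integrable F halfVol := by
  rw [halfVol_eq]; exact h.integrableOn

lemma TestFun.integrable_density {D M : ℝ × ℝ → ℝ} {C : ℝ} (hD : Measurable D) (hM : Measurable M)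
    (bD : ∀ p, |D p| ≤ C) (bM : ∀ p, |M p| ≤ C) {ψ : ℝ × ℝ → ℝ} (hψ : TestFun ψ) :
    Integrable (fun p => D p * pT ψ p + M p * pX ψ p) halfVol := by
  have iT := hψ.continuous_pT.integrable_of_hasCompactSupport (μ := volume) hψ.hasCompactSupport_pT
  have iX := hψ.continuous_pX.integrable_of_hasCompactSupport (μ := volume) hψ.hasCompactSupport_pX
  exact halfVol_integrable ((iT.bdd_mul hD.aestronglyMeasurable (Eventually.of_forall bD)).add
      (iX.bdd_mul hM.aestronglyMeasurable (Eventually.of_forall bM)))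

lemma iterated_eq {D M : ℝ × ℝ → ℝ} {C : ℝ} (hD : Measurable D) (hM : Measurable M)
    (bD : ∀ p, |D p| ≤ C) (bM : ∀ p, |M p| ≤ C) {ψ : ℝ × ℝ → ℝ} (hψ : TestFun ψ) :
    (∫ t in Ioi (0:ℝ), ∫ x, (D (x, t) * pT ψ (x, t) + M (x, t) * pX ψ (x, t)))
      = ∫ p, (D p * pT ψ p + M p * pX ψ p) ∂halfVol :=
  (integral_prod_symm _ (hψ.integrable_density hD hM bD bM)).symm

/-! ### Smooth approximation of Lipschitz curves -/

/-- Bounded measurable functions are a.e. limits of smooth functions with the same bound, by mollification. -/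
lemma exists_smooth_approx {g : ℝ → ℝ} (hg : Measurable g) {K : ℝ} (hK : ∀ t, |g t| ≤ K) :
    ∃ gn : ℕ → ℝ → ℝ, (∀ n, ContDiff ℝ (⊤ : ℕ∞) (gn n)) ∧ (∀ n t, |gn n t| ≤ K) ∧
      ∀ᵐ t, Tendsto (fun n => gn n t) atTop (𝓝 (g t)) := by
  have hK0 : 0 ≤ K := (abs_nonneg _).trans (hK 0)
  let b : ℕ → ContDiffBump (0:ℝ) := fun n =>
    ⟨1 / ((n:ℝ) + 1), 2 * (1 / ((n:ℝ) + 1)), by positivity, by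
      have : 0 < 1 / ((n:ℝ) + 1) := by positivity
      linarith⟩
  have hgl : LocallyIntegrable g volume := by
    rw [locallyIntegrable_iff]
    intro k hk
    exact Measure.integrableOn_of_bounded hk.measure_ne_top hg.aestronglyMeasurable (M := K)
      (Eventually.of_forall hK)
  refine ⟨fun n => convolution ((b n).normed volume) g (ContinuousLinearMap.lsmul ℝ ℝ) volume,
    fun n => ?_, fun n t => ?_, ?_⟩
  · exact HasCompactSupport.contDiff_convolution_left _ (b n).hasCompactSupport_normed
      (b n).contDiff_normed hgl
  · have ib : Integrable ((b n).normed volume) :=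
      (b n).continuous_normed.integrable_of_hasCompactSupport (b n).hasCompactSupport_normed
    beta_reduce
    rw [convolution_def]
    calc _ ≤ ∫ s, (b n).normed volume s * K := by
          refine norm_integral_le_of_norm_le
            (f := fun s => ContinuousLinearMap.lsmul ℝ ℝ ((b n).normed volume s) (g (t - s)))
            (ib.mul_const K) (Eventually.of_forall fun s => ?_)
          simp only [ContinuousLinearMap.lsmul_apply, norm_smul, Real.norm_eq_abs]
          rw [abs_of_nonneg ((b n).nonneg_normed s)]
          exact mul_le_mul_of_nonneg_left (hK _) ((b n).nonneg_normed s)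
      _ = K := by rw [integral_mul_const, (b n).integral_normed, one_mul]
  · refine ContDiffBump.ae_convolution_tendsto_right_of_locallyIntegrable (K := 2) ?_
      (Eventually.of_forall fun n => le_rfl) hgl
    have := (tendsto_one_div_add_atTop_nhds_zero_nat (𝕜 := ℝ)).const_mul 2
    rwa [mul_zero] at this

/-- The curve `t ↦ c + ∫₁ᵗ g` with slope `g` that passes through `x = c` at time `t = 1`. -/
def primitive (g : ℝ → ℝ) (c t : ℝ) : ℝ := c + ∫ s in (1:ℝ)..t, g s

lemma intervalIntegrable_of_bdd {g : ℝ → ℝ} (hg : Measurable g) {K : ℝ} (hK : ∀ t, |g t| ≤ K)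
    (a b : ℝ) : IntervalIntegrable g volume a b := by
  rw [intervalIntegrable_iff]
  exact Measure.integrableOn_of_bounded (by simp) hg.aestronglyMeasurable (M := K)
      (Eventually.of_forall hK)

lemma primitive_continuous {g : ℝ → ℝ} (hg : Measurable g) {K : ℝ} (hK : ∀ t, |g t| ≤ K) (c : ℝ) :
    Continuous (primitive g c) :=
  continuous_const.add
    (intervalIntegral.continuous_primitive (intervalIntegrable_of_bdd hg hK) 1)

lemma primitive_smooth {g : ℝ → ℝ} (hg : ContDiff ℝ (⊤ : ℕ∞) g) (c : ℝ) :
    (∀ t, HasDerivAt (primitive g c) (g t) t) ∧ ContDiff ℝ (⊤ : ℕ∞) (primitive g c) := by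
  have h : ∀ t, HasDerivAt (primitive g c) (g t) t := fun t =>
    (intervalIntegral.integral_hasDerivAt_right (hg.continuous.intervalIntegrable _ _)
      hg.continuous.stronglyMeasurable.stronglyMeasurableAtFilter
      hg.continuous.continuousAt).const_add c
  refine ⟨h, contDiff_infty_iff_deriv.2 ⟨fun t => (h t).differentiableAt, ?_⟩⟩
  rwa [show deriv (primitive g c) = g from funext fun t => (h t).deriv]

/-- Curves whose slopes converge boundedly a.e. converge uniformly on bounded time intervals. -/
lemma primitive_tendsto {g : ℝ → ℝ} (hg : Measurable g) {K : ℝ} (hK : ∀ t, |g t| ≤ K)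
    {gn : ℕ → ℝ → ℝ} (hgn : ∀ n, Measurable (gn n)) (hnK : ∀ n t, |gn n t| ≤ K)
    (hlim : ∀ᵐ t, Tendsto (fun n => gn n t) atTop (𝓝 (g t))) (c T : ℝ) :
    ∃ e : ℕ → ℝ, Tendsto e atTop (𝓝 0) ∧
      ∀ n, ∀ t ∈ Icc (-T) T, |primitive (gn n) c t - primitive g c t| ≤ e n := by
  let I : Set ℝ := Icc (-(|T| + 1)) (|T| + 1)
  have hIfin : IsFiniteMeasure (volume.restrict I) := ⟨by simp [I]⟩
  have bnd : ∀ n t, |gn n t - g t| ≤ 2 * K := fun n t => by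
    have := abs_sub (gn n t) (g t); have := hK t; have := hnK n t; linarith
  refine ⟨fun n => ∫ s in I, |gn n s - g s|, ?_, fun n t ht => ?_⟩
  · have := tendsto_integral_of_dominated_convergence (μ := volume.restrict I)
      (F := fun n s => |gn n s - g s|) (f := fun _ => (0:ℝ)) (fun _ => 2 * K)
      (fun n => ((hgn n).sub hg).abs.aestronglyMeasurable) (integrable_const _)
      (fun n => Eventually.of_forall fun t => by
        rw [Real.norm_eq_abs, abs_abs]; exact bnd n t)
      (ae_restrict_of_ae (hlim.mono fun t ht => by
        have := (ht.sub_const (g t)).abs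
        simpa using this))
    simpa using this
  · have i1 := intervalIntegrable_of_bdd (hgn n) (hnK n) 1 t
    have i2 := intervalIntegrable_of_bdd hg hK 1 t
    have : primitive (gn n) c t - primitive g c t = ∫ s in (1:ℝ)..t, (gn n s - g s) := by
      rw [intervalIntegral.integral_sub i1 i2]; simp [primitive]
    rw [this]
    refine (intervalIntegral.norm_integral_le_integral_norm_uIoc
      (f := fun s => gn n s - g s)).trans ?_
    refine setIntegral_mono_set (s := uIoc 1 t) (t := I) (f := fun s => ‖gn n s - g s‖) ?_
      (Eventually.of_forall fun s => norm_nonneg _) ?_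
    · exact Measure.integrableOn_of_bounded (by simp [I])
        ((hgn n).sub hg).norm.aestronglyMeasurable (M := 2 * K)
        (Eventually.of_forall fun s => by rw [norm_norm]; exact bnd n s)
    · refine (Eventually.of_forall fun s hs => ?_ : uIoc 1 t ≤ᵐ[volume] I)
      have hs' := uIoc_subset_uIcc hs
      have h1 := le_abs_self T
      have h2 := abs_nonneg T
      rcases ht with ⟨h3, h4⟩
      rw [mem_uIcc] at hs'
      constructor <;> rcases hs' with h | h <;> linarith [h.1, h.2]

/-! ### Cutting off the interface -/

/-- The profile of the layer around the interface: a smooth even function with values in `[0,1]`,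
equal to `1` on `[-1,1]` and to `0` outside `(-2,2)`. -/
def bump : ContDiffBump (0:ℝ) := ⟨1, 2, one_pos, one_lt_two⟩

lemma bump_smooth : ContDiff ℝ (⊤ : ℕ∞) bump := bump.contDiff
lemma bump_nonneg (z : ℝ) : 0 ≤ bump z := bump.nonneg
lemma bump_le_one (z : ℝ) : bump z ≤ 1 := bump.le_one
lemma bump_eq_one {z : ℝ} (hz : |z| ≤ 1) : bump z = 1 :=
  bump.one_of_mem_closedBall (by simpa [bump] using hz)
lemma bump_eq_zero {z : ℝ} (hz : 2 ≤ |z|) : bump z = 0 :=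
  bump.zero_of_le_dist (by simpa [bump] using hz)
lemma bump_hasCompactSupport : HasCompactSupport bump := bump.hasCompactSupport
lemma bump_hasDerivAt (z : ℝ) : HasDerivAt bump (deriv bump z) z :=
  (bump_smooth.differentiable (by simp) z).hasDerivAt
lemma bump_deriv_continuous : Continuous (deriv bump) :=
  bump_smooth.continuous_deriv (by simp)
lemma bump_deriv_eq_zero {z : ℝ} (hz : 2 < |z|) : deriv bump z = 0 := by
  have : bump =ᶠ[𝓝 z] fun _ => 0 := by
    filter_upwards [(isOpen_lt continuous_const continuous_abs).mem_nhds hz] with w hw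
    exact bump_eq_zero (le_of_lt hw)
  rw [this.deriv_eq]; simp
lemma bump_deriv_bdd : ∃ B, 0 ≤ B ∧ ∀ z, |deriv bump z| ≤ B := by
  obtain ⟨B, hB⟩ := bump_deriv_continuous.bounded_above_of_compact_support
    bump_hasCompactSupport.deriv
  exact ⟨B, (norm_nonneg _).trans (hB 0), hB⟩

/-- Partial derivatives of `φ` times the cut-off along a differentiable curve `Y` of slope `g`. -/
lemma cut_hasFDerivAt {φ : ℝ × ℝ → ℝ} (hφ : TestFun φ) {Y g : ℝ → ℝ}
    (hY : ∀ t, HasDerivAt Y (g t) t) (ε : ℝ) (p : ℝ × ℝ) :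
    pT (fun p => φ p * (1 - bump ((p.1 - Y p.2) / ε))) p
        = pT φ p * (1 - bump ((p.1 - Y p.2) / ε))
          + φ p * (1 / ε * deriv bump ((p.1 - Y p.2) / ε)) * g p.2 ∧
    pX (fun p => φ p * (1 - bump ((p.1 - Y p.2) / ε))) p
        = pX φ p * (1 - bump ((p.1 - Y p.2) / ε))
          - φ p * (1 / ε * deriv bump ((p.1 - Y p.2) / ε)) := by
  have h1 : HasFDerivAt (fun p : ℝ × ℝ => Y p.2) (g p.2 • ContinuousLinearMap.snd ℝ ℝ ℝ) p :=
    (hY p.2).comp_hasFDerivAt p hasFDerivAt_snd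
  have h2 : HasFDerivAt (fun p : ℝ × ℝ => (p.1 - Y p.2) / ε)
      (ε⁻¹ • (ContinuousLinearMap.fst ℝ ℝ ℝ - g p.2 • ContinuousLinearMap.snd ℝ ℝ ℝ)) p := by
    have := (hasFDerivAt_fst.fun_sub h1).const_mul ε⁻¹
    refine this.congr_of_eventuallyEq (Eventually.of_forall fun q => ?_)
    simp only; ring
  have h3 := ((bump_hasDerivAt ((p.1 - Y p.2) / ε)).comp_hasFDerivAt p h2).const_sub 1
  have h4 := (hφ.differentiable p).hasFDerivAt.fun_mul h3
  have h5 : fderiv ℝ (fun p => φ p * (1 - bump ((p.1 - Y p.2) / ε))) p = _ := h4.fderiv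
  constructor
  · rw [pT, h5]; simp [pT]; ring
  · rw [pX, h5]; simp [pX]; ring

lemma cut_testFun {φ : ℝ × ℝ → ℝ} (hφ : TestFun φ) {Y : ℝ → ℝ}
    (hY : ContDiff ℝ (⊤ : ℕ∞) Y) (ε : ℝ) :
    TestFun (fun p => φ p * (1 - bump ((p.1 - Y p.2) / ε))) := by
  refine ⟨hφ.1.mul (contDiff_const.sub (bump_smooth.comp
    ((contDiff_fst.sub (hY.comp contDiff_snd)).div_const ε))), hφ.2.1.mul_right, fun p => ?_⟩
  exact mul_nonneg (hφ.2.2 p) (sub_nonneg.2 (bump_le_one _))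

/-- If `Y'` stays within `ε` of `Y`, a cut-off vanishing at distance `ε` from the curve `Y` has
support off the curve `Y'`. -/
lemma cut_disjoint {φ : ℝ × ℝ → ℝ} {Y Y' : ℝ → ℝ} (hY : Continuous Y) {ε T : ℝ} (hε : 0 < ε)
    (hT : ∀ p ∈ tsupport φ, p.2 ∈ Icc (-T) T) (hYY : ∀ t ∈ Icc (-T) T, |Y t - Y' t| < ε) :
    Disjoint (tsupport fun p : ℝ × ℝ => φ p * (1 - bump ((p.1 - Y p.2) / ε)))
      {p | p.1 = Y' p.2} := by
  rw [Set.disjoint_left]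
  intro p hp hp'
  have h1 : p ∈ tsupport φ := closure_mono (fun q hq => left_ne_zero_of_mul hq) hp
  have h2 : p ∈ {p : ℝ × ℝ | ε ≤ |p.1 - Y p.2|} := by
    refine closure_minimal (fun q hq => ?_)
      (isClosed_le continuous_const
        ((continuous_fst.sub (hY.comp continuous_snd)).abs)) hp
    by_contra hlt
    refine right_ne_zero_of_mul hq ?_
    rw [bump_eq_one, sub_self]
    rw [abs_div, abs_of_pos hε, div_le_one hε]
    exact (not_le.1 hlt).le
  have h3 := hYY p.2 (hT p h1)
  simp only [mem_ofPred_eq] at hp' h2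
  rw [hp', abs_sub_comm] at h2
  linarith

/-- Kato inequality tested with `φ · (1 - bump((x - Y(t))/ε))`, where `Y = primitive g c` is merely
Lipschitz. This function is not smooth, so the curve is replaced by smooth curves `Yₙ` converging to
`Y`: for large `n` the cut-off around `Yₙ` also removes a neighbourhood of `Y`, and the bounded a.e.
convergence of the slopes lets the integrals pass to the limit. -/
lemma kato_cut {D M : ℝ × ℝ → ℝ} {D₀ : ℝ → ℝ} {C : ℝ} (hD : Measurable D) (hM : Measurable M)
    (hD₀ : Measurable D₀) (bD : ∀ p, |D p| ≤ C) (bM : ∀ p, |M p| ≤ C) (bD₀ : ∀ x, |D₀ x| ≤ C)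
    {g : ℝ → ℝ} (hg : Measurable g) {K : ℝ} (hK : ∀ t, |g t| ≤ K) (c : ℝ)
    (hkato : ∀ ψ, TestFun ψ → Disjoint (tsupport ψ) {p : ℝ × ℝ | p.1 = primitive g c p.2} →
      0 ≤ (∫ p, (D p * pT ψ p + M p * pX ψ p) ∂halfVol) + ∫ x, D₀ x * ψ (x, 0))
    {φ : ℝ × ℝ → ℝ} (hφ : TestFun φ) {ε : ℝ} (hε : 0 < ε) :
    0 ≤ (∫ p, ((D p * pT φ p + M p * pX φ p) * (1 - bump ((p.1 - primitive g c p.2) / ε))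
          - φ p * (1 / ε * deriv bump ((p.1 - primitive g c p.2) / ε)) * (M p - g p.2 * D p))
            ∂halfVol)
        + ∫ x, D₀ x * (φ (x, 0) * (1 - bump ((x - primitive g c 0) / ε))) := by
  obtain ⟨gn, gs, gK, glim⟩ := exists_smooth_approx hg hK
  obtain ⟨B, hB0, hB⟩ := bump_deriv_bdd
  obtain ⟨R, hR0, hR⟩ := hφ.2.1.isCompact.isBounded.subset_closedBall_lt 0 (0 : ℝ × ℝ)
  have hRT : ∀ p ∈ tsupport φ, p.2 ∈ Icc (-R) R := fun p hp => by
    have := hR hp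
    rw [mem_closedBall_zero_iff, Prod.norm_def] at this
    exact abs_le.1 ((le_max_right _ _).trans this)
  obtain ⟨e, he, hbd⟩ := primitive_tendsto hg hK (fun n => (gs n).continuous.measurable) gK glim c
    (max R 0)
  have hYlim : ∀ t, Tendsto (fun n => primitive (gn n) c t) atTop (𝓝 (primitive g c t)) := by
    intro t
    obtain ⟨e, he, hbd⟩ := primitive_tendsto hg hK (fun n => (gs n).continuous.measurable) gK glim c
      |t|
    rw [tendsto_iff_dist_tendsto_zero]
    exact squeeze_zero (fun _ => dist_nonneg)
      (fun n => hbd n t ⟨neg_abs_le t, le_abs_self t⟩) he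
  have hC0 : 0 ≤ C := (abs_nonneg _).trans (bD 0)
  have hK0 : 0 ≤ K := (abs_nonneg _).trans (hK 0)
  have b1 : ∀ z, |1 - bump z| ≤ 1 := fun z => by
    rw [abs_le]; constructor <;> linarith [bump_nonneg z, bump_le_one z]
  -- the cut-off integrands, for a smooth or a limiting curve
  let F : (ℝ → ℝ) → ℝ × ℝ → ℝ := fun g p =>
    (D p * pT φ p + M p * pX φ p) * (1 - bump ((p.1 - primitive g c p.2) / ε))
      - φ p * (1 / ε * deriv bump ((p.1 - primitive g c p.2) / ε)) * (M p - g p.2 * D p)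
  let F₀ : (ℝ → ℝ) → ℝ → ℝ := fun g x =>
    D₀ x * (φ (x, 0) * (1 - bump ((x - primitive g c 0) / ε)))
  have hpos : ∀ᶠ n in atTop, 0 ≤ (∫ p, F (gn n) p ∂halfVol) + ∫ x, F₀ (gn n) x := by
    filter_upwards [he.eventually (gt_mem_nhds hε)] with n hn
    obtain ⟨hd, hs⟩ := primitive_smooth (gs n) c
    have h1 := hkato _ (cut_testFun hφ hs ε) (cut_disjoint (T := max R 0) hs.continuous hε
      (fun p hp => ⟨by have := (hRT p hp).1; have := le_max_left R 0; linarith,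
        (hRT p hp).2.trans (le_max_left _ _)⟩)
      (fun t ht => (hbd n t ht).trans_lt hn))
    refine h1.trans_eq ?_
    congr 1
    refine integral_congr_ae (Eventually.of_forall fun p => ?_)
    obtain ⟨e1, e2⟩ := cut_hasFDerivAt hφ hd ε p
    simp only [F]
    rw [e1, e2]
    ring
  have meas : ∀ g : ℝ → ℝ, Measurable g → (∀ t, |g t| ≤ K) → Measurable (F g) := by
    intro g hg hK
    have hp := (primitive_continuous hg hK c).measurable
    have m1 : Measurable fun p : ℝ × ℝ => (p.1 - primitive g c p.2) / ε :=
      (measurable_fst.sub (hp.comp measurable_snd)).div_const ε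
    exact (((hD.mul hφ.continuous_pT.measurable).add (hM.mul hφ.continuous_pX.measurable)).mul
      (measurable_const.sub (bump_smooth.continuous.measurable.comp m1))).sub
      ((hφ.continuous.measurable.mul
        (measurable_const.mul (bump_deriv_continuous.measurable.comp m1))).mul
        (hM.sub ((hg.comp measurable_snd).mul hD)))
  have meas₀ : ∀ g : ℝ → ℝ, Measurable (F₀ g) := by
    intro g
    have m1 : Measurable fun x : ℝ => (x - primitive g c 0) / ε :=
      (measurable_id.sub measurable_const).div_const ε
    exact hD₀.mul ((hφ.continuous.measurable.comp (by fun_prop)).mul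
      (measurable_const.sub (bump_smooth.continuous.measurable.comp m1)))
  have l1 : Tendsto (fun n => ∫ p, F (gn n) p ∂halfVol) atTop (𝓝 (∫ p, F g p ∂halfVol)) := by
    refine tendsto_integral_of_dominated_convergence
      (fun p => |D p * pT φ p + M p * pX φ p| + (1 / ε * B) * (C + K * C) * |φ p|)
      (fun n => (meas _ (gs n).continuous.measurable (gK n)).aestronglyMeasurable)
      ((hφ.integrable_density hD hM bD bM).abs.add
        ((halfVol_integrable (hφ.continuous.integrable_of_hasCompactSupport hφ.2.1)).abs.const_mul _))
      (fun n => Eventually.of_forall fun p => ?_) ?_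
    · refine (norm_sub_le _ _).trans (add_le_add ?_ ?_)
      · rw [norm_mul]
        exact mul_le_of_le_one_right (norm_nonneg _) (b1 _)
      · rw [norm_mul, norm_mul, norm_mul]
        have h1 : ‖M p - gn n p.2 * D p‖ ≤ C + K * C := by
          refine (norm_sub_le _ _).trans (add_le_add (bM p) ?_)
          rw [norm_mul]
          exact mul_le_mul (gK n _) (bD p) (norm_nonneg _) hK0
        have h2 : ‖1 / ε‖ = 1 / ε := Real.norm_of_nonneg (by positivity)
        have h3 : ‖deriv bump ((p.1 - primitive (gn n) c p.2) / ε)‖ ≤ B := hB _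
        rw [h2]
        calc _ ≤ ‖φ p‖ * (1 / ε * B) * (C + K * C) := by gcongr
          _ = _ := by rw [Real.norm_eq_abs]; ring
    · have := (Measure.quasiMeasurePreserving_snd (μ := (volume : Measure ℝ))
        (ν := volume.restrict (Ioi (0:ℝ)))).ae (ae_restrict_of_ae glim)
      filter_upwards [this] with p hp
      have h1 : Tendsto (fun n => (p.1 - primitive (gn n) c p.2) / ε) atTop
          (𝓝 ((p.1 - primitive g c p.2) / ε)) := ((hYlim p.2).const_sub p.1).div_const ε
      have h2 := (bump_smooth.continuous.tendsto _).comp h1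
      have h3 := (bump_deriv_continuous.tendsto _).comp h1
      exact ((h2.const_sub 1).const_mul _).sub
        (((h3.const_mul (1 / ε)).const_mul (φ p)).mul ((hp.mul_const (D p)).const_sub (M p)))
  have i0 : Integrable fun x => φ (x, 0) := by
    refine (hφ.continuous.comp (by fun_prop)).integrable_of_hasCompactSupport
      (HasCompactSupport.intro (K := Prod.fst '' tsupport φ)
        (hφ.2.1.isCompact.image continuous_fst) fun x hx => ?_)
    by_contra h0
    exact hx ⟨(x, 0), subset_tsupport _ h0, rfl⟩
  have l2 : Tendsto (fun n => ∫ x, F₀ (gn n) x) atTop (𝓝 (∫ x, F₀ g x)) := by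
    refine tendsto_integral_of_dominated_convergence (fun x => C * |φ (x, 0)|)
      (fun n => (meas₀ _).aestronglyMeasurable) (i0.abs.const_mul C)
      (fun n => Eventually.of_forall fun x => ?_) (Eventually.of_forall fun x => ?_)
    · rw [norm_mul, norm_mul]
      refine mul_le_mul (bD₀ x) (mul_le_of_le_one_right (norm_nonneg _) (b1 _)) (by positivity) hC0
    · have h1 : Tendsto (fun n => (x - primitive (gn n) c 0) / ε) atTop
          (𝓝 ((x - primitive g c 0) / ε)) := ((hYlim 0).const_sub x).div_const ε
      have h2 := (bump_smooth.continuous.tendsto _).comp h1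
      exact ((h2.const_sub 1).const_mul _).const_mul _
  exact ge_of_tendsto (l1.add l2) hpos

/-! ### Limit of the interface layer -/

/-- Weighted with `bump'`, whose integrals over the negative and the positive half line are `1` and
`-1`, a bounded function with one-sided limits `Jm`, `Jp` at `0` concentrates to `Jm - Jp`. -/
lemma layer_limit {J : ℝ → ℝ} (hJ : Measurable J) {B : ℝ} (hB : ∀ w, |J w| ≤ B) {Jp Jm : ℝ}
    (hp : Tendsto J (𝓝[>] 0) (𝓝 Jp)) (hm : Tendsto (fun w => J (-w)) (𝓝[>] 0) (𝓝 Jm)) :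
    Tendsto (fun n : ℕ => ∫ z, deriv bump z * J (1 / ((n:ℝ) + 1) * z)) atTop (𝓝 (Jm - Jp)) := by
  have ib : Integrable (deriv bump) :=
    bump_deriv_continuous.integrable_of_hasCompactSupport bump_hasCompactSupport.deriv
  have hε : Tendsto (fun n : ℕ => 1 / ((n:ℝ) + 1)) atTop (𝓝[>] 0) :=
    tendsto_nhdsWithin_iff.2 ⟨tendsto_one_div_add_atTop_nhds_zero_nat,
      Eventually.of_forall fun n => by simp only [mem_Ioi]; positivity⟩
  have hscale : ∀ a : ℝ, 0 < a → Tendsto (fun n : ℕ => 1 / ((n:ℝ) + 1) * a) atTop (𝓝[>] 0) := by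
    intro a ha
    refine tendsto_nhdsWithin_iff.2 ⟨?_, Eventually.of_forall fun n => by
      simp only [mem_Ioi]; positivity⟩
    simpa using (tendsto_one_div_add_atTop_nhds_zero_nat (𝕜 := ℝ)).mul_const a
  have hlim : Tendsto (fun n : ℕ => ∫ z, deriv bump z * J (1 / ((n:ℝ) + 1) * z)) atTop
      (𝓝 (∫ z, (Ioi (0:ℝ)).piecewise (fun z => deriv bump z * Jp) (fun z => deriv bump z * Jm) z)) := by
    refine tendsto_integral_of_dominated_convergence (fun z => |deriv bump z| * B)
      (fun n => (bump_deriv_continuous.measurable.mul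
        (hJ.comp (measurable_const.mul measurable_id))).aestronglyMeasurable)
      (ib.abs.mul_const B) (fun n => Eventually.of_forall fun z => ?_)
      (Eventually.of_forall fun z => ?_)
    · rw [norm_mul]
      exact mul_le_mul_of_nonneg_left (hB _) (norm_nonneg _)
    · rcases lt_trichotomy z 0 with hz | hz | hz
      · rw [piecewise_eq_of_notMem _ _ _ (by simp [hz.le])]
        refine Tendsto.const_mul _ ((hm.comp (hscale (-z) (by linarith))).congr fun n => ?_)
        simp
      · have h0 : deriv bump z = 0 := by
          have : bump =ᶠ[𝓝 z] fun _ => 1 := by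
            filter_upwards [(isOpen_lt continuous_abs continuous_const).mem_nhds
              (show |z| < 1 by simp [hz])] with w hw
            exact bump_eq_one (le_of_lt hw)
          rw [this.deriv_eq]; simp
        rw [piecewise_eq_of_notMem _ _ _ (by simp [hz])]
        simp [h0]
      · rw [piecewise_eq_of_mem (Ioi (0:ℝ)) _ _ (show z ∈ Ioi (0:ℝ) from hz)]
        exact (hp.comp (hscale z hz)).const_mul _
  convert hlim using 2
  rw [integral_piecewise measurableSet_Ioi (ib.mul_const Jp).integrableOn
    (ib.mul_const Jm).integrableOn, integral_mul_const, integral_mul_const, compl_Ioi,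
    HasCompactSupport.integral_Ioi_deriv_eq (bump_smooth.of_le (by exact_mod_cast le_top))
      bump_hasCompactSupport,
    HasCompactSupport.integral_Iic_deriv_eq (bump_smooth.of_le (by exact_mod_cast le_top))
      bump_hasCompactSupport, bump_eq_one (by simp)]
  ring

/-- The `φ`-weighted integral over `t > 0` of `N` along the translate `x = Y t + w` of the curve. -/
def sliceInt (φ N : ℝ × ℝ → ℝ) (Y : ℝ → ℝ) (w : ℝ) : ℝ :=
  ∫ t in Ioi (0:ℝ), φ (Y t + w, t) * N (Y t + w, t)

lemma TestFun.exists_bounds {φ : ℝ × ℝ → ℝ} (hφ : TestFun φ) : ∃ T C : ℝ, 0 < T ∧ 0 ≤ C ∧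
    (∀ p, |φ p| ≤ C) ∧ ∀ p : ℝ × ℝ, T ≤ |p.2| → φ p = 0 := by
  obtain ⟨R, hR0, hR⟩ := hφ.2.1.isCompact.isBounded.subset_closedBall_lt 0 (0 : ℝ × ℝ)
  obtain ⟨C, hC⟩ := hφ.continuous.bounded_above_of_compact_support hφ.2.1
  refine ⟨R + 1, C, by linarith, (norm_nonneg _).trans (hC 0), hC, fun p hp => ?_⟩
  by_contra h0
  have := hR (subset_tsupport _ h0)
  rw [mem_closedBall_zero_iff, Prod.norm_def] at this
  have := (le_max_right _ _).trans this
  rw [Real.norm_eq_abs] at this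
  linarith

lemma sliceInt_meas_bdd {φ N : ℝ × ℝ → ℝ} (hφ : TestFun φ) (hN : Measurable N) {B : ℝ}
    (hB : ∀ p, |N p| ≤ B) {Y : ℝ → ℝ} (hY : Continuous Y) :
    Measurable (sliceInt φ N Y) ∧ ∃ B', ∀ w, |sliceInt φ N Y w| ≤ B' := by
  have hm : Measurable fun q : ℝ × ℝ => φ (Y q.2 + q.1, q.2) * N (Y q.2 + q.1, q.2) := by
    have : Measurable fun q : ℝ × ℝ => (Y q.2 + q.1, q.2) := by fun_prop
    exact (hφ.continuous.measurable.comp this).mul (hN.comp this)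
  refine ⟨?_, ?_⟩
  · exact (StronglyMeasurable.integral_prod_right
      (f := fun w t => φ (Y t + w, t) * N (Y t + w, t)) hm.stronglyMeasurable).measurable
  · obtain ⟨T, C, hT, hC0, hC, hφT⟩ := hφ.exists_bounds
    have hB0 : 0 ≤ B := (abs_nonneg _).trans (hB 0)
    refine ⟨∫ t, (Icc (-T) T).indicator (fun _ => C * B) t ∂(volume.restrict (Ioi 0)), fun w => ?_⟩
    refine norm_integral_le_of_norm_le (f := fun t => φ (Y t + w, t) * N (Y t + w, t)) ?_
      (Eventually.of_forall fun t => ?_)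
    · refine Integrable.restrict ?_
      rw [integrable_indicator_iff measurableSet_Icc]
      exact integrableOn_const (by simp)
    · by_cases ht : t ∈ Icc (-T) T
      · rw [indicator_of_mem ht, norm_mul]
        exact mul_le_mul (hC _) (hB _) (norm_nonneg _) hC0
      · rw [indicator_of_notMem ht, hφT _ (by
          by_contra h
          exact ht (abs_le.1 (not_le.1 h).le))]
        simp

/-- In the variable `z = (x - Y t)/ε`, the term produced by the gradient of the cut-off is an average
of the integrals along the translated curves. -/
lemma layer_eq {φ N : ℝ × ℝ → ℝ} (hφ : TestFun φ) (hN : Measurable N) {B : ℝ}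
    (hB : ∀ p, |N p| ≤ B) {Y : ℝ → ℝ} (hY : Continuous Y) {ε : ℝ} (hε : 0 < ε) :
    Integrable (fun p => φ p * (1 / ε * deriv bump ((p.1 - Y p.2) / ε)) * N p) halfVol ∧
    ∫ p, φ p * (1 / ε * deriv bump ((p.1 - Y p.2) / ε)) * N p ∂halfVol
      = ∫ z, deriv bump z * sliceInt φ N Y (ε * z) := by
  obtain ⟨T, C, hT, hC0, hC, hφT⟩ := hφ.exists_bounds
  obtain ⟨B', hB'0, hB'⟩ := bump_deriv_bdd
  have hB0 : 0 ≤ B := (abs_nonneg _).trans (hB 0)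
  have i1 : Integrable (fun p => φ p * (1 / ε * deriv bump ((p.1 - Y p.2) / ε)) * N p) := by
    have h1 : Continuous fun p : ℝ × ℝ => φ p * (1 / ε * deriv bump ((p.1 - Y p.2) / ε)) :=
      hφ.continuous.mul (continuous_const.mul (bump_deriv_continuous.comp
        ((continuous_fst.sub (hY.comp continuous_snd)).div_const ε)))
    exact (h1.integrable_of_hasCompactSupport hφ.2.1.mul_right).mul_bdd (c := B)
      hN.aestronglyMeasurable (Eventually.of_forall hB)
  refine ⟨halfVol_integrable i1, ?_⟩
  rw [integral_prod_symm _ (halfVol_integrable i1)]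
  have e1 : ∀ t, ∫ x, φ (x, t) * (1 / ε * deriv bump ((x - Y t) / ε)) * N (x, t)
      = ∫ z, deriv bump z * (φ (Y t + ε * z, t) * N (Y t + ε * z, t)) := by
    intro t
    rw [← integral_add_left_eq_self _ (Y t)]
    have := Measure.integral_comp_mul_left (fun x => φ (Y t + x, t) *
      (1 / ε * deriv bump ((Y t + x - Y t) / ε)) * N (Y t + x, t)) ε
    rw [abs_of_pos (inv_pos.2 hε), smul_eq_mul, eq_inv_mul_iff_mul_eq₀ hε.ne'] at this
    rw [← this, ← integral_const_mul]
    refine integral_congr_ae (Eventually.of_forall fun z => ?_)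
    simp only
    rw [add_sub_cancel_left, mul_div_cancel_left₀ _ hε.ne']
    field_simp
  simp only [e1]
  have i2 : Integrable (fun q : ℝ × ℝ =>
      deriv bump q.2 * (φ (Y q.1 + ε * q.2, q.1) * N (Y q.1 + ε * q.2, q.1)))
      ((volume.restrict (Ioi (0:ℝ))).prod volume) := by
    have hm : Measurable fun q : ℝ × ℝ => (Y q.1 + ε * q.2, q.1) := by fun_prop
    refine integrable_of_bdd (s := Icc (-T) T ×ˢ Icc (-2) 2) (C := B' * (C * B))
      ((bump_deriv_continuous.measurable.comp measurable_snd).mul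
        ((hφ.continuous.measurable.comp hm).mul (hN.comp hm))) ?_ (fun q hq => ?_) (fun q => ?_)
    · rw [Measure.prod_prod]
      refine ENNReal.mul_ne_top ?_ (by simp)
      exact ((Measure.restrict_apply_le _ _).trans_lt (by simp)).ne
    · by_contra h0
      apply hq
      have h1 : deriv bump q.2 ≠ 0 := left_ne_zero_of_mul h0
      have h2 : φ (Y q.1 + ε * q.2, q.1) ≠ 0 := left_ne_zero_of_mul (right_ne_zero_of_mul h0)
      exact ⟨abs_le.1 (not_lt.1 fun h => h2 (hφT _ h.le)),
        abs_le.1 (not_lt.1 fun h => h1 (bump_deriv_eq_zero h))⟩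
    · rw [abs_mul, abs_mul]
      have := hB' q.2
      have := hC (Y q.1 + ε * q.2, q.1)
      have := hB (Y q.1 + ε * q.2, q.1)
      gcongr
  rw [integral_integral_swap i2]
  simp only [sliceInt, integral_const_mul]

lemma graph_null {Y : ℝ → ℝ} (hY : Continuous Y) : ∀ᵐ p ∂halfVol, p.1 ≠ Y p.2 := by
  have hm : MeasurableSet {p : ℝ × ℝ | p.1 = Y p.2} :=
    (isClosed_eq continuous_fst (hY.comp continuous_snd)).measurableSet
  rw [ae_iff]
  simp only [ne_eq, not_not]
  rw [Measure.prod_apply_symm hm]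
  simp

lemma bump_scale_tendsto {a : ℝ} (ha : a ≠ 0) :
    Tendsto (fun n : ℕ => 1 - bump (a / (1 / ((n:ℝ) + 1)))) atTop (𝓝 1) := by
  refine tendsto_const_nhds.congr' ?_
  obtain ⟨N, hN⟩ := exists_nat_ge (2 / |a|)
  filter_upwards [eventually_ge_atTop N] with n hn
  have ha' : 0 < |a| := abs_pos.2 ha
  rw [bump_eq_zero, sub_zero]
  rw [div_div_eq_mul_div, div_one, abs_mul, abs_of_pos (by positivity : (0:ℝ) < n + 1)]
  rw [div_le_iff₀ ha'] at hN
  have : (N:ℝ) ≤ n := by exact_mod_cast hn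
  nlinarith

/-- From test functions vanishing near the curve to arbitrary ones: letting `ε → 0` in `kato_cut`,
the cut-off tends to `1` off the null set `x = Y t`, and its gradient leaves the jump across the curve
of the normal flux `M - g D`. -/
lemma kato_interface {D M : ℝ × ℝ → ℝ} {D₀ : ℝ → ℝ} {C : ℝ} (hD : Measurable D) (hM : Measurable M)
    (hD₀ : Measurable D₀) (bD : ∀ p, |D p| ≤ C) (bM : ∀ p, |M p| ≤ C) (bD₀ : ∀ x, |D₀ x| ≤ C)
    {g : ℝ → ℝ} (hg : Measurable g) {K : ℝ} (hK : ∀ t, |g t| ≤ K) (c : ℝ)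
    (hkato : ∀ ψ, TestFun ψ → Disjoint (tsupport ψ) {p : ℝ × ℝ | p.1 = primitive g c p.2} →
      0 ≤ (∫ p, (D p * pT ψ p + M p * pX ψ p) ∂halfVol) + ∫ x, D₀ x * ψ (x, 0))
    {φ : ℝ × ℝ → ℝ} (hφ : TestFun φ) {Jp Jm : ℝ}
    (hp : Tendsto (sliceInt φ (fun p => M p - g p.2 * D p) (primitive g c)) (𝓝[>] 0) (𝓝 Jp))
    (hm : Tendsto (fun w => sliceInt φ (fun p => M p - g p.2 * D p) (primitive g c) (-w))
      (𝓝[>] 0) (𝓝 Jm)) :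
    0 ≤ (∫ p, (D p * pT φ p + M p * pX φ p) ∂halfVol) + (∫ x, D₀ x * φ (x, 0)) + (Jp - Jm) := by
  set Y := primitive g c with hYdef
  have hY : Continuous Y := primitive_continuous hg hK c
  set N : ℝ × ℝ → ℝ := fun p => M p - g p.2 * D p with hNdef
  have hC0 : 0 ≤ C := (abs_nonneg _).trans (bD 0)
  have hK0 : 0 ≤ K := (abs_nonneg _).trans (hK 0)
  have mN : Measurable N := hM.sub ((hg.comp measurable_snd).mul hD)
  have bN : ∀ p, |N p| ≤ C + K * C := fun p => by
    refine (norm_sub_le (M p) (g p.2 * D p)).trans (add_le_add (bM p) ?_)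
    rw [norm_mul]
    exact mul_le_mul (hK _) (bD p) (norm_nonneg _) hK0
  have b1 : ∀ z, |1 - bump z| ≤ 1 := fun z => by
    rw [abs_le]; constructor <;> linarith [bump_nonneg z, bump_le_one z]
  obtain ⟨mJ, BJ, hBJ⟩ := sliceInt_meas_bdd hφ mN bN hY
  have iF := hφ.integrable_density hD hM bD bM
  have mF : Measurable fun p => D p * pT φ p + M p * pX φ p :=
    (hD.mul hφ.continuous_pT.measurable).add (hM.mul hφ.continuous_pX.measurable)
  have mcut : ∀ ε : ℝ, Measurable fun p : ℝ × ℝ => 1 - bump ((p.1 - Y p.2) / ε) := fun ε =>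
    measurable_const.sub (bump_smooth.continuous.measurable.comp
      ((measurable_fst.sub (hY.measurable.comp measurable_snd)).div_const ε))
  have hpos : ∀ n : ℕ, 0 ≤ (∫ p, (D p * pT φ p + M p * pX φ p) *
        (1 - bump ((p.1 - Y p.2) / (1 / ((n:ℝ) + 1)))) ∂halfVol)
      - (∫ z, deriv bump z * sliceInt φ N Y (1 / ((n:ℝ) + 1) * z))
      + ∫ x, D₀ x * (φ (x, 0) * (1 - bump ((x - Y 0) / (1 / ((n:ℝ) + 1))))) := by
    intro n
    have hε : 0 < 1 / ((n:ℝ) + 1) := by positivity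
    have h1 := kato_cut hD hM hD₀ bD bM bD₀ hg hK c hkato hφ hε
    obtain ⟨i2, e2⟩ := layer_eq hφ mN bN hY hε
    rw [← hYdef, integral_sub (iF.mul_bdd (c := 1) (mcut _).aestronglyMeasurable
      (Eventually.of_forall fun p => b1 _)) i2, e2] at h1
    exact h1
  have l1 : Tendsto (fun n : ℕ => ∫ p, (D p * pT φ p + M p * pX φ p) *
        (1 - bump ((p.1 - Y p.2) / (1 / ((n:ℝ) + 1)))) ∂halfVol) atTop
      (𝓝 (∫ p, (D p * pT φ p + M p * pX φ p) ∂halfVol)) := by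
    refine tendsto_integral_of_dominated_convergence (fun p => |D p * pT φ p + M p * pX φ p|)
      (fun n => (mF.mul (mcut _)).aestronglyMeasurable) iF.abs
      (fun n => Eventually.of_forall fun p => ?_) ?_
    · rw [norm_mul]
      exact mul_le_of_le_one_right (norm_nonneg _) (b1 _)
    · filter_upwards [graph_null hY] with p hp
      simpa using (bump_scale_tendsto (sub_ne_zero.2 hp)).const_mul (D p * pT φ p + M p * pX φ p)
  have i0 : Integrable fun x => φ (x, 0) := by
    refine (hφ.continuous.comp (by fun_prop)).integrable_of_hasCompactSupport
      (HasCompactSupport.intro (K := Prod.fst '' tsupport φ)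
        (hφ.2.1.isCompact.image continuous_fst) fun x hx => ?_)
    by_contra h0
    exact hx ⟨(x, 0), subset_tsupport _ h0, rfl⟩
  have l2 : Tendsto (fun n : ℕ => ∫ x, D₀ x * (φ (x, 0) *
      (1 - bump ((x - Y 0) / (1 / ((n:ℝ) + 1)))))) atTop (𝓝 (∫ x, D₀ x * φ (x, 0))) := by
    refine tendsto_integral_of_dominated_convergence (fun x => C * |φ (x, 0)|)
      (fun n => (hD₀.mul ((hφ.continuous.measurable.comp (by fun_prop)).mul
        (measurable_const.sub (bump_smooth.continuous.measurable.comp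
          ((measurable_id.sub measurable_const).div_const _))))).aestronglyMeasurable)
      (i0.abs.const_mul C) (fun n => Eventually.of_forall fun x => ?_) ?_
    · rw [norm_mul, norm_mul]
      refine mul_le_mul (bD₀ x) (mul_le_of_le_one_right (norm_nonneg _) (b1 _)) (by positivity) hC0
    · have : ∀ᵐ x : ℝ, x ≠ Y 0 := by simp [ae_iff]
      filter_upwards [this] with x hx
      simpa using ((bump_scale_tendsto (sub_ne_zero.2 hx)).const_mul (φ (x, 0))).const_mul (D₀ x)
  have l3 := layer_limit mJ hBJ hp hm
  have := ge_of_tendsto' ((l1.sub l3).add l2) hpos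
  linarith

/-! ### One-sided traces -/

/-- If `n` is the strong trace of `N` on the side of the curve given by the sign of `s`, the integrals
along the translated curves converge to the integral of the trace. -/
lemma sliceInt_tendsto {φ N : ℝ × ℝ → ℝ} (hφ : TestFun φ) (hN : Measurable N) {B : ℝ}
    (hB : ∀ p, |N p| ≤ B) {Y : ℝ → ℝ} (hY : Continuous Y) {n : ℝ → ℝ}
    (hn : ∀ T, IntegrableOn n (Ioo 0 T)) (s : ℝ)
    (htr : ∀ T, 0 < T → Tendsto (fun ε => ∫ t in Ioo (0:ℝ) T, |N (Y t + s * ε, t) - n t|)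
      (𝓝[>] 0) (𝓝 0)) :
    Tendsto (fun ε => sliceInt φ N Y (s * ε)) (𝓝[>] 0)
      (𝓝 (∫ t in Ioi (0:ℝ), n t * φ (Y t, t))) := by
  obtain ⟨T, C, hT, hC0, hC, hφT⟩ := hφ.exists_bounds
  obtain ⟨Λ, hΛ⟩ := hφ.1.lipschitzWith_of_hasCompactSupport hφ.2.1 (by simp)
  have hB0 : 0 ≤ B := (abs_nonneg _).trans (hB 0)
  have hred : ∀ F : ℝ → ℝ, (∀ t, T ≤ |t| → F t = 0) →
      ∫ t in Ioi (0:ℝ), F t = ∫ t in Ioo (0:ℝ) T, F t := by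
    intro F hF
    refine setIntegral_eq_of_subset_of_forall_sdiff_eq_zero (s := Ioo (0:ℝ) T) measurableSet_Ioi
      (fun t ht => ht.1) (fun t ht => hF t ?_)
    by_contra h
    exact ht.2 ⟨ht.1, (le_abs_self t).trans_lt (not_le.1 h)⟩
  have fin : IsFiniteMeasure (volume.restrict (Ioo (0:ℝ) T)) := ⟨by simp⟩
  have mshift : ∀ w : ℝ, Measurable fun t => (Y t + w, t) := fun w => by fun_prop
  rw [tendsto_iff_dist_tendsto_zero]
  have hlim : Tendsto (fun ε : ℝ => Λ * |s * ε| * B * T +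
      C * ∫ t in Ioo (0:ℝ) T, |N (Y t + s * ε, t) - n t|) (𝓝[>] 0) (𝓝 0) := by
    have h1 : Tendsto (fun ε : ℝ => Λ * |s * ε| * B * T) (𝓝[>] 0) (𝓝 0) := by
      have : Continuous fun ε : ℝ => Λ * |s * ε| * B * T := by fun_prop
      simpa using (this.tendsto 0).mono_left nhdsWithin_le_nhds
    simpa using h1.add ((htr T hT).const_mul C)
  refine squeeze_zero (fun _ => dist_nonneg) (fun ε => ?_) hlim
  set w := s * ε
  have iN : Integrable (fun t => N (Y t + w, t)) (volume.restrict (Ioo 0 T)) :=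
    (integrable_const B).mono' (hN.comp (mshift w)).aestronglyMeasurable
      (Eventually.of_forall fun t => hB _)
  have i1 : Integrable (fun t => φ (Y t + w, t) * N (Y t + w, t)) (volume.restrict (Ioo 0 T)) :=
    iN.bdd_mul (hφ.continuous.measurable.comp (mshift w)).aestronglyMeasurable
      (Eventually.of_forall fun t => hC _)
  have i2 : Integrable (fun t => n t * φ (Y t, t)) (volume.restrict (Ioo 0 T)) :=
    (hn T).mul_bdd (c := C)
      (hφ.continuous.comp (hY.prodMk continuous_id)).measurable.aestronglyMeasurable
      (Eventually.of_forall fun t => hC _)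
  rw [sliceInt, hred _ (fun t ht => by simp [hφT (Y t + w, t) ht]),
    hred _ (fun t ht => by simp [hφT (Y t, t) ht]), dist_eq_norm, ← integral_sub i1 i2]
  have i3 : Integrable (fun t => |N (Y t + w, t) - n t|) (volume.restrict (Ioo 0 T)) :=
    (iN.sub (hn T)).abs
  calc _ ≤ ∫ t in Ioo (0:ℝ) T, (Λ * |w| * B + C * |N (Y t + w, t) - n t|) := by
        refine norm_integral_le_of_norm_le ((integrable_const _).add (i3.const_mul C))
          (Eventually.of_forall fun t => ?_)
        have e : φ (Y t + w, t) * N (Y t + w, t) - n t * φ (Y t, t)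
            = (φ (Y t + w, t) - φ (Y t, t)) * N (Y t + w, t)
              + φ (Y t, t) * (N (Y t + w, t) - n t) := by ring
        rw [e]
        refine (norm_add_le _ _).trans ?_
        rw [norm_mul, norm_mul]
        have h1 : ‖φ (Y t + w, t) - φ (Y t, t)‖ ≤ Λ * |w| := by
          have := hΛ.dist_le_mul (Y t + w, t) (Y t, t)
          rwa [dist_eq_norm, dist_eq_norm, Prod.mk_sub_mk, add_sub_cancel_left, sub_self,
            Prod.norm_mk, norm_zero, max_eq_left (norm_nonneg _)] at this
        exact add_le_add (mul_le_mul h1 (hB _) (norm_nonneg _) (by positivity))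
          (mul_le_mul_of_nonneg_right (hC _) (norm_nonneg _))
    _ = _ := by
        rw [integral_add (integrable_const _) (i3.const_mul C), setIntegral_const,
          integral_const_mul, Real.volume_real_Ioo_of_le hT.le, smul_eq_mul]
        ring

/-! ### Gluing a solution with its initial datum -/

/-- Extension to the plane of a function on `t > 0`, by its initial datum for `t ≤ 0`. -/
def glue (ρ : ℝ → ℝ → ℝ) (ρo : ℝ → ℝ) (p : ℝ × ℝ) : ℝ := if 0 < p.2 then ρ p.1 p.2 else ρo p.1

/-- The Heaviside function, with value `0` at `0` so that it agrees with the case split in `glue`. -/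
def heav (t : ℝ) : ℝ := if 0 < t then 1 else 0

lemma measurable_heav : Measurable heav :=
  Measurable.ite measurableSet_Ioi measurable_const measurable_const

lemma abs_heav_le (t : ℝ) : |heav t| ≤ 1 := by
  unfold heav; split_ifs <;> simp

lemma heav_eq_of_lt (t t' : ℝ) (h : |t - t'| < |t|) : heav t = heav t' := by
  unfold heav
  rcases lt_or_ge 0 t with ht | ht
  · rw [abs_of_pos ht] at h
    have := le_abs_self (t - t')
    rw [if_pos ht, if_pos (by linarith)]
  · rw [abs_of_nonpos ht] at h
    have := neg_le_abs (t - t')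
    rw [if_neg (not_lt.2 ht), if_neg (by linarith)]

lemma measurable_glue {ρ : ℝ → ℝ → ℝ} {ρo : ℝ → ℝ} (hρ : Measurable fun p : ℝ × ℝ => ρ p.1 p.2)
    (hρo : Measurable ρo) : Measurable (glue ρ ρo) :=
  Measurable.ite (measurableSet_lt measurable_const measurable_snd) hρ (hρo.comp measurable_fst)

lemma glue_mem {ρ : ℝ → ℝ → ℝ} {ρo : ℝ → ℝ} (hρ : ∀ x t, ρ x t ∈ Icc (0:ℝ) 1)
    (hρo : ∀ x, ρo x ∈ Icc (0:ℝ) 1) (p : ℝ × ℝ) : glue ρ ρo p ∈ Icc (0:ℝ) 1 := by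
  unfold glue; split_ifs
  exacts [hρ _ _, hρo _]

/-- For glued functions the Kruzhkov integral over the plane is the interior term plus the initial
term of the statement. -/
lemma glued_integral {Q : ℝ → ℝ → ℝ} {L : ℝ} (hQ : EntropyFlux Q L) {ρ σ : ℝ → ℝ → ℝ}
    {ρo σo : ℝ → ℝ} (hρ : Measurable fun p : ℝ × ℝ => ρ p.1 p.2)
    (hσ : Measurable fun p : ℝ × ℝ => σ p.1 p.2) (hρo : Measurable ρo) (hσo : Measurable σo)
    (bρ : ∀ x t, ρ x t ∈ Icc (0:ℝ) 1) (bσ : ∀ x t, σ x t ∈ Icc (0:ℝ) 1)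
    (bρo : ∀ x, ρo x ∈ Icc (0:ℝ) 1) (bσo : ∀ x, σo x ∈ Icc (0:ℝ) 1)
    {ψ : ℝ × ℝ → ℝ} (hψ : TestFun ψ) :
    ∫ p, entDen Q heav (glue ρ ρo) (glue σ σo) ψ p
      = (∫ t in Ioi (0:ℝ), ∫ x,
          (|ρ x t - σ x t| * pT ψ (x, t) + Q (ρ x t) (σ x t) * pX ψ (x, t)))
        + ∫ x, |ρo x - σo x| * ψ (x, 0) := by
  have h1 : (1:ℝ) ≤ 1 + L := by linarith [hQ.nonneg]
  rw [← split_integral (D := fun p => |ρ p.1 p.2 - σ p.1 p.2|)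
    (M := fun p => Q (ρ p.1 p.2) (σ p.1 p.2)) (D₀ := fun x => |ρo x - σo x|) (C := 1 + L)
    (hρ.sub hσ).abs (hQ.continuous.measurable.comp (hρ.prodMk hσ)) (hρo.sub hσo).abs
    (fun p => by rw [abs_abs]; exact (abs_sub_le_one (bρ _ _) (bσ _ _)).trans h1)
    (fun p => (hQ.bdd (bρ _ _) (bσ _ _)).trans (by linarith))
    (fun x => by rw [abs_abs]; exact (abs_sub_le_one (bρo _) (bσo _)).trans h1) hψ]
  refine integral_congr_ae (Eventually.of_forall fun p => ?_)
  simp only [entDen, glue, heav]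
  split_ifs <;> ring

/-- The entropy inequalities of a solution, initial term included, are plane entropy inequalities for
the glued function. -/
lemma entIneq_of_sol {f g : ℝ → ℝ} {L : ℝ} (hQ : EntropyFlux (EFlx g 0) L)
    (hfg : ∀ a ∈ Icc (0:ℝ) 1, f a = g a) {ρ : ℝ → ℝ → ℝ} {ρo y : ℝ → ℝ}
    (hρ : Measurable fun p : ℝ × ℝ => ρ p.1 p.2) (hρo : Measurable ρo)
    (bρ : ∀ x t, ρ x t ∈ Icc (0:ℝ) 1) (bρo : ∀ x, ρo x ∈ Icc (0:ℝ) 1)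
    (hsol : ∀ κ ∈ Icc (0:ℝ) 1, ∀ φ : ℝ × ℝ → ℝ, TestFun φ → Disjoint (tsupport φ) (Gam y) →
      0 ≤ interiorTerm f ρ κ φ + initTerm ρo κ φ) :
    EntIneq (EFlx g 0) heav (Gam y) (glue ρ ρo) := by
  intro κ hκ ψ hψ hd
  have h := hsol κ hκ ψ hψ hd
  have e : (fun _ : ℝ × ℝ => κ) = glue (fun _ _ => κ) (fun _ => κ) := by
    funext p; simp [glue]
  rw [e, glued_integral hQ hρ measurable_const hρo measurable_const bρ (fun _ _ => hκ) bρo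
    (fun _ => hκ) hψ]
  refine h.trans_eq ?_
  simp only [interiorTerm, initTerm, EFlx_congr 0 (hfg _ (bρ _ _)) (hfg κ hκ)]

/-! ### The flux and the interface -/

/-- The flux is only controlled on `[0,1]`; it agrees there with a globally Lipschitz function. -/
lemma exists_flux_extension {f : ℝ → ℝ} {ρb : ℝ} (hf : BellShaped f ρb) :
    ∃ (L : ℝ) (g : ℝ → ℝ), 0 ≤ L ∧ (∀ a b, |g a - g b| ≤ L * |a - b|) ∧
      ∀ a ∈ Icc (0:ℝ) 1, f a = g a := by
  obtain ⟨K, hK⟩ := hf.smooth.exists_lipschitzOnWith two_ne_zero (convex_Icc 0 1) isCompact_Icc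
  obtain ⟨g, hg, hgf⟩ := hK.extend_real
  exact ⟨K, g, K.2, fun a b => by simpa [Real.dist_eq] using hg.dist_le_mul a b, hgf⟩

/-- Admissibility bounds the slope by the Lipschitz constant of the flux. It provides a point `a` with
`q < f(a) - s a`; since `f` vanishes at `0` and at `1`, one has `f(a) ≤ L a` and `f(a) ≤ L (1-a)`, which
contradicts `q ≥ 0` if `s > L` and `q ≥ -s` if `s < -L`. -/
lemma AdmissiblePair.abs_slope_le {f g : ℝ → ℝ} {ρb L s q : ℝ} (hf : BellShaped f ρb)
    (hg : ∀ a b, |g a - g b| ≤ L * |a - b|) (hfg : ∀ a ∈ Icc (0:ℝ) 1, f a = g a)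
    (h : AdmissiblePair f s q) : |s| ≤ L := by
  have key : q < maxFlx f s → ∃ a ∈ Icc (0:ℝ) 1, q < f a - s * a ∧ f a ≤ L * a ∧
      f a ≤ L * (1 - a) := by
    intro hq
    obtain ⟨_, ⟨a, ha, rfl⟩, hlt⟩ := exists_lt_of_lt_csSup
      ((nonempty_Icc.2 zero_le_one).image _) hq
    have h0 : g 0 = 0 := by rw [← hfg 0 (by simp), hf.zero_at_zero]
    have h1 : g 1 = 0 := by rw [← hfg 1 (by simp), hf.zero_at_one]
    have e0 := (le_abs_self _).trans (hg a 0)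
    have e1 := (le_abs_self _).trans (hg a 1)
    rw [h0, sub_zero, sub_zero, abs_of_nonneg ha.1] at e0
    rw [h1, sub_zero, abs_sub_comm, abs_of_nonneg (by linarith [ha.2])] at e1
    exact ⟨a, ha, hlt, by rw [hfg a ha]; exact e0, by rw [hfg a ha]; exact e1⟩
  rcases h with ⟨hs, hq0, hq⟩ | ⟨hs, hq0, hq⟩
  · obtain ⟨a, ha, h1, h2, -⟩ := key hq
    rw [abs_of_nonneg hs]
    by_contra hlt
    nlinarith [ha.1]
  · obtain ⟨a, ha, h1, -, h2⟩ := key hq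
    rw [abs_of_neg hs]
    by_contra hlt
    nlinarith [ha.2]

/-- The slope of the interface truncated to `[-L, L]` and extended by `0` to `t ≤ 0`: an everywhere
bounded version of `ẏ`. -/
def truncSlope (y : ℝ → ℝ) (L t : ℝ) : ℝ := if 0 < t then max (-L) (min L (deriv y t)) else 0

lemma measurable_truncSlope (y : ℝ → ℝ) (L : ℝ) : Measurable (truncSlope y L) :=
  Measurable.ite measurableSet_Ioi
    (measurable_const.max (measurable_const.min (measurable_deriv y))) measurable_const

lemma abs_truncSlope_le {L : ℝ} (hL : 0 ≤ L) (y : ℝ → ℝ) (t : ℝ) : |truncSlope y L t| ≤ L := by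
  unfold truncSlope
  split_ifs
  · exact abs_le.2 ⟨le_max_left _ _, max_le (by linarith) (min_le_left _ _)⟩
  · simpa

lemma truncSlope_eq {y : ℝ → ℝ} {L t : ℝ} (ht : 0 < t) (h : |deriv y t| ≤ L) :
    truncSlope y L t = deriv y t := by
  rw [truncSlope, if_pos ht, min_eq_right (abs_le.1 h).2, max_eq_right (abs_le.1 h).1]

/-- The interface is the restriction to `t > 0` of a globally Lipschitz curve on `ℝ`. -/
lemma eq_primitive {y : ℝ → ℝ} (hy : LocLip y) {L : ℝ}
    (hL : ∀ᵐ t ∂(volume.restrict (Ioi (0:ℝ))), |deriv y t| ≤ L) {t : ℝ} (ht : 0 < t) :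
    y t = primitive (truncSlope y L) (y 1) t := by
  have hsub : uIcc 1 t ⊆ Ioi 0 := fun s hs => by
    rw [mem_uIcc] at hs
    rcases hs with h | h
    · exact lt_of_lt_of_le one_pos h.1
    · exact lt_of_lt_of_le ht h.1
  obtain ⟨C, hC⟩ := hy _ isCompact_uIcc hsub
  have h1 := hC.absolutelyContinuousOnInterval.integral_deriv_eq_sub
  have h2 : ∫ s in (1:ℝ)..t, truncSlope y L s = ∫ s in (1:ℝ)..t, deriv y s := by
    refine intervalIntegral.integral_congr_ae ?_
    rw [ae_restrict_iff' measurableSet_Ioi] at hL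
    filter_upwards [hL] with s hs hs'
    have h0 : 0 < s := hsub (uIoc_subset_uIcc hs')
    exact truncSlope_eq h0 (hs h0)
  rw [primitive, h2, h1]; ring

/-- Strong traces of the two solutions give the strong trace of the normal entropy flux
`Φ(ρ,σ) - g|ρ-σ|`, which is Lipschitz in the pair `(ρ,σ)`. -/
lemma trace_combine {Q : ℝ → ℝ → ℝ} {L : ℝ} (hQ : EntropyFlux Q L) {ρ σ : ℝ → ℝ → ℝ}
    (hρ : Measurable fun p : ℝ × ℝ => ρ p.1 p.2) (hσ : Measurable fun p : ℝ × ℝ => σ p.1 p.2)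
    (bρ : ∀ x t, ρ x t ∈ Icc (0:ℝ) 1) (bσ : ∀ x t, σ x t ∈ Icc (0:ℝ) 1) {a b : ℝ → ℝ}
    (ha : Measurable a) (hb : Measurable b)
    (ba : ∀ᵐ t ∂(volume.restrict (Ioi (0:ℝ))), a t ∈ Icc (0:ℝ) 1)
    (bb : ∀ᵐ t ∂(volume.restrict (Ioi (0:ℝ))), b t ∈ Icc (0:ℝ) 1)
    {g : ℝ → ℝ} (hg : Measurable g) (hgL : ∀ t, |g t| ≤ L) {Y : ℝ → ℝ} (hY : Continuous Y) (s : ℝ)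
    (h1 : ∀ T, 0 < T → Tendsto (fun ε => ∫ t in Ioo (0:ℝ) T, |ρ (Y t + s * ε) t - a t|)
      (𝓝[>] 0) (𝓝 0))
    (h2 : ∀ T, 0 < T → Tendsto (fun ε => ∫ t in Ioo (0:ℝ) T, |σ (Y t + s * ε) t - b t|)
      (𝓝[>] 0) (𝓝 0)) :
    (∀ T, IntegrableOn (fun t => Q (a t) (b t) - g t * |a t - b t|) (Ioo 0 T)) ∧
    ∀ T, 0 < T → Tendsto (fun ε => ∫ t in Ioo (0:ℝ) T,
      |(fun p : ℝ × ℝ => Q (ρ p.1 p.2) (σ p.1 p.2) - g p.2 * |ρ p.1 p.2 - σ p.1 p.2|)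
          (Y t + s * ε, t) - (Q (a t) (b t) - g t * |a t - b t|)|) (𝓝[>] 0) (𝓝 0) := by
  have hres : ∀ T : ℝ, ∀ P : ℝ → Prop, (∀ᵐ t ∂(volume.restrict (Ioi (0:ℝ))), P t) →
      ∀ᵐ t ∂(volume.restrict (Ioo (0:ℝ) T)), P t := fun T P h =>
    ae_restrict_of_ae_restrict_of_subset Ioo_subset_Ioi_self h
  have hL := hQ.nonneg
  refine ⟨fun T => ?_, fun T hT => ?_⟩
  · have fin : IsFiniteMeasure (volume.restrict (Ioo (0:ℝ) T)) := ⟨by simp⟩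
    refine (integrable_const (L + L * 1)).mono' ((hQ.continuous.measurable.comp (ha.prodMk hb)).sub
      (hg.mul (ha.sub hb).abs)).aestronglyMeasurable ?_
    filter_upwards [hres T _ ba, hres T _ bb] with t hta htb
    refine (norm_sub_le _ _).trans (add_le_add (hQ.bdd hta htb) ?_)
    rw [norm_mul, Real.norm_eq_abs (|a t - b t|), abs_abs]
    exact mul_le_mul (hgL t) (abs_sub_le_one hta htb) (abs_nonneg _) hL
  · have fin : IsFiniteMeasure (volume.restrict (Ioo (0:ℝ) T)) := ⟨by simp⟩
    have hlim := ((h1 T hT).add (h2 T hT)).const_mul (2 * L)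
    rw [add_zero, mul_zero] at hlim
    refine squeeze_zero (fun ε => integral_nonneg fun t => abs_nonneg _) (fun ε => ?_) hlim
    have msh : Measurable fun t => (Y t + s * ε, t) := by fun_prop
    have i1 : Integrable (fun t => |ρ (Y t + s * ε) t - a t|) (volume.restrict (Ioo 0 T)) := by
      refine (integrable_const (1:ℝ)).mono' ((hρ.comp msh).sub ha).abs.aestronglyMeasurable ?_
      filter_upwards [hres T _ ba] with t hta
      rw [Real.norm_eq_abs, abs_abs]; exact abs_sub_le_one (bρ _ _) hta
    have i2 : Integrable (fun t => |σ (Y t + s * ε) t - b t|) (volume.restrict (Ioo 0 T)) := by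
      refine (integrable_const (1:ℝ)).mono' ((hσ.comp msh).sub hb).abs.aestronglyMeasurable ?_
      filter_upwards [hres T _ bb] with t htb
      rw [Real.norm_eq_abs, abs_abs]; exact abs_sub_le_one (bσ _ _) htb
    rw [← integral_add i1 i2, ← integral_const_mul]
    refine integral_mono_of_nonneg (Eventually.of_forall fun t => abs_nonneg _)
      ((i1.add i2).const_mul _) (Eventually.of_forall fun t => ?_)
    simp only
    set u := ρ (Y t + s * ε) t
    set v := σ (Y t + s * ε) t
    have e1 := hQ.lip u v (a t) (b t)
    have e2 : |g t * (|u - v| - |a t - b t|)| ≤ L * (|u - a t| + |v - b t|) := by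
      rw [abs_mul]
      refine mul_le_mul (hgL t) ?_ (abs_nonneg _) hL
      refine (abs_abs_sub_abs_le _ _).trans ?_
      rw [show u - v - (a t - b t) = (u - a t) - (v - b t) by ring]
      exact abs_sub _ _
    have e3 : Q u v - g t * |u - v| - (Q (a t) (b t) - g t * |a t - b t|)
        = (Q u v - Q (a t) (b t)) - g t * (|u - v| - |a t - b t|) := by ring
    rw [e3]
    refine (abs_sub _ _).trans ?_
    linarith

lemma trace_term_integrable {n : ℝ → ℝ} (hn : ∀ T, IntegrableOn n (Ioo 0 T)) {φ : ℝ × ℝ → ℝ}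
    (hφ : TestFun φ) {Y : ℝ → ℝ} (hY : Continuous Y) :
    IntegrableOn (fun t => n t * φ (Y t, t)) (Ioi 0) := by
  obtain ⟨T, C, hT, hC0, hC, hφT⟩ := hφ.exists_bounds
  refine IntegrableOn.of_forall_sdiff_eq_zero (s := Ioo 0 T) ?_ measurableSet_Ioi fun t ht => ?_
  · exact (hn T).mul_bdd (c := C)
      (hφ.continuous.comp (hY.prodMk continuous_id)).measurable.aestronglyMeasurable
      (Eventually.of_forall fun t => hC _)
  · rw [hφT (Y t, t) (not_lt.1 fun h => ht.2 ⟨ht.1, (le_abs_self t).trans_lt h⟩), mul_zero]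

/-! ### The Kato inequality -/

/-- Kato inequality: for a `G_{ẏ}(q)`-entropy solution `ρ` and a
`G_{ẏ}(r)`-entropy solution `σ`, the Kato inequality holds for every nonnegative
test function. -/
theorem kato_inequality
    (f : ℝ → ℝ) (ρb : ℝ) (hf : BellShaped f ρb)
    (ρo σo : ℝ → ℝ) (hρo_meas : Measurable ρo) (hρo_mem : ∀ x, ρo x ∈ Icc (0:ℝ) 1)
    (hσo_meas : Measurable σo) (hσo_mem : ∀ x, σo x ∈ Icc (0:ℝ) 1)
    (y : ℝ → ℝ) (hy : LocLip y)
    (q r : ℝ → ℝ) (hq_meas : Measurable q) (hq_bdd : LocBdd q)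
    (hr_meas : Measurable r) (hr_bdd : LocBdd r)
    (hadmq : ∀ᵐ t ∂(volume.restrict (Ioi (0:ℝ))), AdmissiblePair f (deriv y t) (q t))
    (hadmr : ∀ᵐ t ∂(volume.restrict (Ioi (0:ℝ))), AdmissiblePair f (deriv y t) (r t))
    (ρ σ : ℝ → ℝ → ℝ)
    (hρ_meas : Measurable fun p : ℝ × ℝ => ρ p.1 p.2)
    (hρ_mem : ∀ x t, ρ x t ∈ Icc (0:ℝ) 1)
    (hσ_meas : Measurable fun p : ℝ × ℝ => σ p.1 p.2)
    (hσ_mem : ∀ x t, σ x t ∈ Icc (0:ℝ) 1)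
    (ρm ρp σm σp : ℝ → ℝ)
    (hρm : Measurable ρm) (hρp : Measurable ρp)
    (hσm : Measurable σm) (hσp : Measurable σp)
    (hρsol : IsGermSol f ρo y q ρ ρm ρp)
    (hσsol : IsGermSol f σo y r σ σm σp) :
    ∀ φ : ℝ × ℝ → ℝ, TestFun φ →
      0 ≤ (∫ t in Ioi (0:ℝ), ∫ x : ℝ,
             (|ρ x t - σ x t| * pT φ (x, t)
               + EFlx f 0 (ρ x t) (σ x t) * pX φ (x, t)))
        + (∫ x : ℝ, |ρo x - σo x| * φ (x, 0))
        + ∫ t in Ioi (0:ℝ),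
            (EFlx f (deriv y t) (ρp t) (σp t) - EFlx f (deriv y t) (ρm t) (σm t))
              * φ (y t, t) := by
  intro φ hφ
  obtain ⟨L, g₀, hL, hg₀, hfg⟩ := exists_flux_extension hf
  have hQ := entropyFlux_EFlx hL hg₀
  set Q := EFlx g₀ 0 with hQdef
  have hslope : ∀ᵐ t ∂(volume.restrict (Ioi (0:ℝ))), |deriv y t| ≤ L :=
    hadmq.mono fun t ht => ht.abs_slope_le hf hg₀ hfg
  set g := truncSlope y L with hgdef
  have hg : Measurable g := measurable_truncSlope y L
  have hgL : ∀ t, |g t| ≤ L := abs_truncSlope_le hL y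
  set Y := primitive g (y 1) with hYdef
  have hY : Continuous Y := primitive_continuous hg hgL _
  have hyY : ∀ t, 0 < t → y t = Y t := fun t ht => eq_primitive hy hslope ht
  have hΓ : closure (Gam y) ⊆ {p : ℝ × ℝ | p.1 = Y p.2} := by
    refine closure_minimal ?_ (isClosed_eq continuous_fst (hY.comp continuous_snd))
    rintro _ ⟨t, ht, rfl⟩
    exact hyY t ht
  have h1 : (1:ℝ) ≤ 1 + L := by linarith
  have mD : Measurable fun p : ℝ × ℝ => |ρ p.1 p.2 - σ p.1 p.2| := (hρ_meas.sub hσ_meas).abs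
  have mM : Measurable fun p : ℝ × ℝ => Q (ρ p.1 p.2) (σ p.1 p.2) :=
    hQ.continuous.measurable.comp (hρ_meas.prodMk hσ_meas)
  have bD : ∀ p : ℝ × ℝ, |(|ρ p.1 p.2 - σ p.1 p.2|)| ≤ 1 + L := fun p => by
    rw [abs_abs]; exact (abs_sub_le_one (hρ_mem _ _) (hσ_mem _ _)).trans h1
  have bM : ∀ p : ℝ × ℝ, |Q (ρ p.1 p.2) (σ p.1 p.2)| ≤ 1 + L := fun p =>
    (hQ.bdd (hρ_mem _ _) (hσ_mem _ _)).trans (by linarith)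
  -- off the interface: doubling for the glued functions
  have hkato : ∀ ψ, TestFun ψ → Disjoint (tsupport ψ) {p : ℝ × ℝ | p.1 = Y p.2} →
      0 ≤ (∫ p, (|ρ p.1 p.2 - σ p.1 p.2| * pT ψ p + Q (ρ p.1 p.2) (σ p.1 p.2) * pX ψ p) ∂halfVol)
        + ∫ x, |ρo x - σo x| * ψ (x, 0) := by
    intro ψ hψ hd
    have h := doubling hQ measurable_heav abs_heav_le heav_eq_of_lt
      (measurable_glue hρ_meas hρo_meas) (measurable_glue hσ_meas hσo_meas)
      (glue_mem hρ_mem hρo_mem) (glue_mem hσ_mem hσo_mem)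
      (entIneq_of_sol hQ hfg hρ_meas hρo_meas hρ_mem hρo_mem hρsol.1)
      (entIneq_of_sol hQ hfg hσ_meas hσo_meas hσ_mem hσo_mem hσsol.1) hψ (hd.mono_right hΓ)
    rw [glued_integral hQ hρ_meas hσ_meas hρo_meas hσo_meas hρ_mem hσ_mem hρo_mem hσo_mem hψ] at h
    rwa [← iterated_eq mD mM bD bM hψ]
  -- the traces take values in `[0,1]`
  have bρm : ∀ᵐ t ∂(volume.restrict (Ioi (0:ℝ))), ρm t ∈ Icc (0:ℝ) 1 := hρsol.2.2.mono fun t h => h.1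
  have bρp : ∀ᵐ t ∂(volume.restrict (Ioi (0:ℝ))), ρp t ∈ Icc (0:ℝ) 1 :=
    hρsol.2.2.mono fun t h => h.2.1
  have bσm : ∀ᵐ t ∂(volume.restrict (Ioi (0:ℝ))), σm t ∈ Icc (0:ℝ) 1 := hσsol.2.2.mono fun t h => h.1
  have bσp : ∀ᵐ t ∂(volume.restrict (Ioi (0:ℝ))), σp t ∈ Icc (0:ℝ) 1 :=
    hσsol.2.2.mono fun t h => h.2.1
  have trp : ∀ (τ : ℝ → ℝ → ℝ) (a b : ℝ → ℝ), HasTraces y τ a b → ∀ T, 0 < T →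
      Tendsto (fun ε => ∫ t in Ioo (0:ℝ) T, |τ (Y t + 1 * ε) t - b t|) (𝓝[>] 0) (𝓝 0) := by
    intro τ a b h T hT
    refine (h T hT).2.congr fun ε => setIntegral_congr_fun measurableSet_Ioo fun t ht => ?_
    simp only [hyY t ht.1, one_mul]
  have trm : ∀ (τ : ℝ → ℝ → ℝ) (a b : ℝ → ℝ), HasTraces y τ a b → ∀ T, 0 < T →
      Tendsto (fun ε => ∫ t in Ioo (0:ℝ) T, |τ (Y t + (-1) * ε) t - a t|) (𝓝[>] 0) (𝓝 0) := by
    intro τ a b h T hT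
    refine (h T hT).1.congr fun ε => setIntegral_congr_fun measurableSet_Ioo fun t ht => ?_
    simp only [hyY t ht.1, neg_one_mul, sub_eq_add_neg]
  obtain ⟨ip, tp⟩ := trace_combine hQ hρ_meas hσ_meas hρ_mem hσ_mem hρp hσp bρp bσp hg hgL hY 1
    (trp _ _ _ hρsol.2.1) (trp _ _ _ hσsol.2.1)
  obtain ⟨im, tm⟩ := trace_combine hQ hρ_meas hσ_meas hρ_mem hσ_mem hρm hσm bρm bσm hg hgL hY (-1)
    (trm _ _ _ hρsol.2.1) (trm _ _ _ hσsol.2.1)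
  have mN : Measurable fun p : ℝ × ℝ =>
      Q (ρ p.1 p.2) (σ p.1 p.2) - g p.2 * |ρ p.1 p.2 - σ p.1 p.2| :=
    mM.sub ((hg.comp measurable_snd).mul mD)
  have bN : ∀ p : ℝ × ℝ, abs (Q (ρ p.1 p.2) (σ p.1 p.2) - g p.2 * |ρ p.1 p.2 - σ p.1 p.2|)
      ≤ L + L * 1 := fun p => by
    refine (abs_sub _ _).trans (add_le_add (hQ.bdd (hρ_mem _ _) (hσ_mem _ _)) ?_)
    rw [abs_mul, abs_abs]
    exact mul_le_mul (hgL _) (abs_sub_le_one (hρ_mem _ _) (hσ_mem _ _)) (abs_nonneg _) hL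
  have lp := sliceInt_tendsto hφ mN bN hY ip 1 tp
  have lm := sliceInt_tendsto hφ mN bN hY im (-1) tm
  simp only [one_mul] at lp
  simp only [neg_one_mul] at lm
  have key := kato_interface mD mM (hρo_meas.sub hσo_meas).abs bD bM
    (fun x => by rw [abs_abs]; exact (abs_sub_le_one (hρo_mem _) (hσo_mem _)).trans h1)
    hg hgL (y 1) hkato hφ lp lm
  rw [← iterated_eq mD mM bD bM hφ, ← integral_sub (trace_term_integrable ip hφ hY)
    (trace_term_integrable im hφ hY)] at key
  refine key.trans_eq ?_
  congr 1
  · simp only [hQdef, EFlx_congr 0 (hfg _ (hρ_mem _ _)) (hfg _ (hσ_mem _ _)), Pi.sub_apply]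
  · refine integral_congr_ae ?_
    filter_upwards [bρm, bρp, bσm, bσp, hslope, ae_restrict_mem measurableSet_Ioi]
      with t h1 h2 h3 h4 h5 h6
    rw [EFlx_eq f _ (ρp t), EFlx_eq f _ (ρm t), EFlx_congr 0 (hfg _ h2) (hfg _ h4),
      EFlx_congr 0 (hfg _ h1) (hfg _ h3), hyY t h6, ← truncSlope_eq h6 h5]
    ring
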